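/- arXiv:0905.2497 — 3 statements merged into one kernel-verified Lean document; each statement's English description precedes it below -/
import Mathlib

section
/- Let h_1, …, h_t ∈ ℝ[x,y] satisfy the Archimedean assumption and let K := {(x,y) ∈ ℝ^n × ℝ^p : h_k(x,y) ≥ 0, k = 1, …, t}. A real sequence z = (z_{αβ})_{α∈ℕ^n, β∈ℕ^p} has a representing finite Borel measure supported on K (i.e., z_{αβ} = ∫_K x^α y^β dμ for some finite Borel measure μ on K) if and only if M_i(z) ⪰ 0 and M_i(h_k z) ⪰ 0 for every i ∈ ℕ and every k = 1, …, t. -/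
open MeasureTheory MvPolynomial Set

noncomputable section

/-- The Riesz-like linear functional `L_z` associated with a double-indexed real
sequence `z = (z_{αβ})`, sending `Σ f_{αβ} x^α y^β` to `Σ f_{αβ} z_{αβ}`. -/
def Lz (n p : ℕ) (z : (Fin n → ℕ) → (Fin p → ℕ) → ℝ)
    (q : MvPolynomial (Fin n ⊕ Fin p) ℝ) : ℝ :=
  ∑ d ∈ q.support, q.coeff d * z (fun k => d (Sum.inl k)) (fun l => d (Sum.inr l))

/-- The Archimedean (Putinar) assumption for the family `H`: for some `N`,
`N - ‖(x,y)‖²` lies in the quadratic module generated by the `H j`. -/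
def ArchimedeanQM (n p : ℕ) {ι : Type*} [Fintype ι]
    (H : ι → MvPolynomial (Fin n ⊕ Fin p) ℝ) : Prop :=
  ∃ (N : ℝ) (σ0 : MvPolynomial (Fin n ⊕ Fin p) ℝ)
    (σ : ι → MvPolynomial (Fin n ⊕ Fin p) ℝ),
    IsSumSq σ0 ∧ (∀ j, IsSumSq (σ j)) ∧
    C N - (∑ i : Fin n ⊕ Fin p, X i ^ 2) = σ0 + ∑ j, σ j * H j

/-!
A functional `L` that is nonnegative on an Archimedean quadratic module `M` of a commutative
`ℝ`-algebra `A` is nonnegative at every element at which all characters nonnegative on `M` are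
nonnegative. Indeed, the states of `M` form a compact convex set, so by Krein–Milman it suffices to
treat extreme states. If `c - f²` lies in `M`, an extreme state `L` splits as the sum of
`c⁻¹ L(f² ·)` and `c⁻¹ L((c - f²) ·)`, both nonnegative on `M`; extremality makes each proportional
to `L`, whence `L(f² g) = L(f²) L(g)`, and polarization shows that `L` is a character.

For polynomials the characters are point evaluations, those nonnegative on `M` being the points of
the compact set `K`. Hence `L` is nonnegative on polynomials nonnegative on `K`, extends to a
positive functional on `C(K, ℝ)` by M. Riesz, and is represented by a measure by
Riesz–Markov–Kakutani.
-/

section LogConvex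

variable {s : ℕ → ℝ}

lemma mul_le_mul_succ_of_sq_le_mul (hs : ∀ k, 0 ≤ s k)
    (hlog : ∀ k, s (k + 1) ^ 2 ≤ s k * s (k + 2)) (k : ℕ) :
    s 1 * s k ≤ s 0 * s (k + 1) := by
  induction k with
  | zero => exact (mul_comm _ _).le
  | succ k ih =>
    rcases (hs (k + 1)).eq_or_lt with hzero | hpos
    · rw [← hzero, mul_zero]
      exact mul_nonneg (hs _) (hs _)
    · have hk : 0 < s k :=
        pos_of_mul_pos_left ((pow_pos hpos 2).trans_le (hlog k)) (hs (k + 2))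
      refine le_of_mul_le_mul_left ?_ hk
      calc s k * (s 1 * s (k + 1)) = s 1 * s k * s (k + 1) := by ring
        _ ≤ s 0 * s (k + 1) * s (k + 1) := by gcongr
        _ = s 0 * s (k + 1) ^ 2 := by ring
        _ ≤ s 0 * (s k * s (k + 2)) := mul_le_mul_of_nonneg_left (hlog k) (hs 0)
        _ = s k * (s 0 * s (k + 2)) := by ring

lemma le_mul_of_sq_le_mul_of_le_pow {c D : ℝ} (hc : 0 < c) (hs : ∀ k, 0 ≤ s k)
    (hlog : ∀ k, s (k + 1) ^ 2 ≤ s k * s (k + 2)) (hgrowth : ∀ k, s k ≤ D * c ^ k) :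
    s 1 ≤ c * s 0 := by
  rcases (hs 0).eq_or_lt with hzero | hpos
  · have hsq : s 1 ^ 2 ≤ 0 := by simpa [← hzero] using hlog 0
    simp [← hzero, pow_eq_zero_iff two_ne_zero |>.1 (hsq.antisymm (sq_nonneg _))]
  set r := s 1 / s 0
  have hr : 0 ≤ r := div_nonneg (hs 1) (hs 0)
  have hstep (k : ℕ) : r * s k ≤ s (k + 1) := by
    rw [div_mul_eq_mul_div, div_le_iff₀ hpos, mul_comm (s (k + 1))]
    exact mul_le_mul_succ_of_sq_le_mul hs hlog k
  have hpow (k : ℕ) : r ^ k * s 0 ≤ s k := by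
    induction k with
    | zero => simp
    | succ k ih =>
      calc r ^ (k + 1) * s 0 = r * (r ^ k * s 0) := by ring
        _ ≤ r * s k := by gcongr
        _ ≤ s (k + 1) := hstep k
  by_contra! hlt
  have hratio : 1 < r / c := by rwa [one_lt_div hc, lt_div_iff₀ hpos]
  obtain ⟨k, hk⟩ := pow_unbounded_of_one_lt (D / s 0) hratio
  rw [div_pow, div_lt_div_iff₀ hpos (pow_pos hc k)] at hk
  linarith [hpow k, hgrowth k]

end LogConvex

section QuadraticModule

variable {A : Type*} [CommRing A] {M : Submodule (Subsemiring.sumSq A) A}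

lemma sq_mul_mem {m : A} (hm : m ∈ M) (a : A) : a ^ 2 * m ∈ M :=
  M.smul_mem ⟨a ^ 2, by simp [pow_two]⟩ hm

lemma sq_mem (h1 : 1 ∈ M) (a : A) : a ^ 2 ∈ M := by
  simpa using sq_mul_mem h1 a

variable {ι : Type*}

/-- The quadratic module `ΣA² + ∑ₖ ΣA² hₖ` generated by a family `h`. -/
def quadraticModule (h : ι → A) : Submodule (Subsemiring.sumSq A) A :=
  Submodule.span _ (insert 1 (range h))

lemma one_mem_quadraticModule (h : ι → A) : 1 ∈ quadraticModule h :=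
  Submodule.subset_span (mem_insert _ _)

lemma mem_quadraticModule (h : ι → A) (k : ι) : h k ∈ quadraticModule h :=
  Submodule.subset_span (mem_insert_of_mem _ (mem_range_self k))

variable [Algebra ℝ A]

lemma smul_mem_of_nonneg {m : A} (hm : m ∈ M) {c : ℝ} (hc : 0 ≤ c) : c • m ∈ M := by
  have := sq_mul_mem hm (algebraMap ℝ A √c)
  rwa [← map_pow, Real.sq_sqrt hc, ← Algebra.smul_def] at this

lemma algebraMap_mem_of_nonneg (h1 : 1 ∈ M) {c : ℝ} (hc : 0 ≤ c) : algebraMap ℝ A c ∈ M := by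
  rw [Algebra.algebraMap_eq_smul_one]
  exact smul_mem_of_nonneg h1 hc

lemma algebraMap_mul_sub_sq_mem {f g : A} {c d : ℝ} (hc : 0 ≤ c)
    (hf : algebraMap ℝ A c - f ^ 2 ∈ M) (hg : algebraMap ℝ A d - g ^ 2 ∈ M) :
    algebraMap ℝ A (c * d) - (f * g) ^ 2 ∈ M := by
  have := M.add_mem (sq_mul_mem hf g) (smul_mem_of_nonneg hg hc)
  rw [Algebra.smul_def] at this
  convert this using 1
  rw [map_mul]
  ring

lemma algebraMap_pow_sub_sq_mem {f : A} {c : ℝ} (hc : 0 ≤ c)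
    (hf : algebraMap ℝ A c - f ^ 2 ∈ M) (k : ℕ) :
    algebraMap ℝ A (c ^ k) - (f ^ k) ^ 2 ∈ M := by
  induction k with
  | zero => simp
  | succ k ih =>
    rw [pow_succ' c, pow_succ' f]
    exact algebraMap_mul_sub_sq_mem hc hf ih

/-- The subalgebra of bounded elements of a quadratic module `M`, that is, of a `ΣA²`-submodule
of `A` containing `1`. The module is Archimedean when this is all of `A`. Bounds may always be
enlarged, so asking for `0 < c` loses nothing. -/
def boundedSubalgebra (M : Submodule (Subsemiring.sumSq A) A) (h1 : 1 ∈ M) : Subalgebra ℝ A where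
  carrier := {f | ∃ c : ℝ, 0 < c ∧ algebraMap ℝ A c - f ^ 2 ∈ M}
  mul_mem' := by
    rintro f g ⟨c, hc, hf⟩ ⟨d, hd, hg⟩
    exact ⟨c * d, mul_pos hc hd, algebraMap_mul_sub_sq_mem hc.le hf hg⟩
  add_mem' := by
    rintro f g ⟨c, hc, hf⟩ ⟨d, hd, hg⟩
    refine ⟨2 * (c + d), by positivity, ?_⟩
    have := M.add_mem (smul_mem_of_nonneg (M.add_mem hf hg) zero_le_two) (sq_mem h1 (f - g))
    rw [Algebra.smul_def] at this
    convert this using 1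
    simp only [map_mul, map_add, map_ofNat]
    ring
  algebraMap_mem' r := by
    refine ⟨r ^ 2 + 1, by positivity, ?_⟩
    simpa only [map_add, map_pow, map_one, add_sub_cancel_left] using h1

lemma mem_boundedSubalgebra {h1 : 1 ∈ M} {f : A} :
    f ∈ boundedSubalgebra M h1 ↔ ∃ c : ℝ, 0 < c ∧ algebraMap ℝ A c - f ^ 2 ∈ M :=
  Iff.rfl

lemma map_mul_nonneg_of_isSumSq {L : A →ₗ[ℝ] ℝ} {g : A} (hL : ∀ q, 0 ≤ L (g * q ^ 2))
    {a : A} (ha : IsSumSq a) : 0 ≤ L (a * g) := by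
  induction ha with
  | zero => simp
  | sq_add a _ ih =>
    rw [add_mul, map_add, ← pow_two, mul_comm (a ^ 2)]
    exact add_nonneg (hL a) ih

lemma forall_mem_quadraticModule_nonneg_iff {h : ι → A} {L : A →ₗ[ℝ] ℝ} :
    (∀ m ∈ quadraticModule h, 0 ≤ L m) ↔
      (∀ q, 0 ≤ L (q ^ 2)) ∧ ∀ k q, 0 ≤ L (h k * q ^ 2) := by
  refine ⟨fun hL => ⟨fun q => hL _ (sq_mem (one_mem_quadraticModule h) q), fun k q => ?_⟩, ?_⟩
  · rw [mul_comm]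
    exact hL _ (sq_mul_mem (mem_quadraticModule h k) q)
  · rintro ⟨hsq, hmul⟩ m hm
    suffices hweighted : ∀ a : Subsemiring.sumSq A, 0 ≤ L (a • m) by simpa using hweighted 1
    induction hm using Submodule.span_induction with
    | mem g hg =>
      rintro ⟨a, ha⟩
      rcases hg with rfl | ⟨k, rfl⟩
      · exact map_mul_nonneg_of_isSumSq (by simpa using hsq) (by simpa using ha)
      · exact map_mul_nonneg_of_isSumSq (hmul k) (by simpa using ha)
    | zero => simp
    | add x y _ _ hx hy =>
      intro a
      rw [smul_add, map_add]
      exact add_nonneg (hx a) (hy a)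
    | smul b x _ hx =>
      intro a
      rw [smul_smul]
      exact hx _

end QuadraticModule

section PositiveFunctional

variable {A : Type*} [CommRing A] [Algebra ℝ A]

lemma sq_map_mul_mul_le {L : A →ₗ[ℝ] ℝ} {m : A} (hL : ∀ q, 0 ≤ L (q ^ 2 * m)) (u v : A) :
    L (u * v * m) ^ 2 ≤ L (u ^ 2 * m) * L (v ^ 2 * m) := by
  let B : LinearMap.BilinForm ℝ A :=
    (LinearMap.mul ℝ A).compr₂ (L ∘ₗ LinearMap.mulRight ℝ m)
  have hB (x y : A) : B x y = L (x * y * m) := rfl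
  have := B.apply_mul_apply_le_of_forall_zero_le (fun x => by simpa [hB, pow_two] using hL x) u v
  simpa only [hB, mul_comm v u, ← pow_two] using this

lemma sq_map_mul_le {L : A →ₗ[ℝ] ℝ} (hL : ∀ q, 0 ≤ L (q ^ 2)) (u v : A) :
    L (u * v) ^ 2 ≤ L (u ^ 2) * L (v ^ 2) := by
  simpa using sq_map_mul_mul_le (m := 1) (by simpa using hL) u v

lemma eq_zero_of_map_one_eq_zero {L : A →ₗ[ℝ] ℝ} (hL : ∀ q, 0 ≤ L (q ^ 2)) (h1 : L 1 = 0) :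
    L = 0 := by
  ext a
  have : L a ^ 2 ≤ 0 := by simpa [h1] using sq_map_mul_le hL a 1
  simpa using this.antisymm (sq_nonneg _)

variable {M : Submodule (Subsemiring.sumSq A) A} {L : A →ₗ[ℝ] ℝ}

lemma map_pow_sq_le (hL : ∀ m ∈ M, 0 ≤ L m) {f : A} {c : ℝ} (hc : 0 ≤ c)
    (hf : algebraMap ℝ A c - f ^ 2 ∈ M) (k : ℕ) : L ((f ^ k) ^ 2) ≤ c ^ k * L 1 := by
  have := hL _ (algebraMap_pow_sub_sq_mem hc hf k)
  rwa [map_sub, Algebra.algebraMap_eq_smul_one, map_smul, smul_eq_mul, sub_nonneg] at this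

/- `(c - f²) * m` need not lie in `M`. However, `k ↦ L (f²ᵏ * m)` is log-convex, and its growth
rate is at most `c` because `L (f⁴ᵏ) ≤ c²ᵏ L 1`; so its first ratio is at most `c` as well. -/
lemma map_sq_mul_le (h1 : 1 ∈ M) (hL : ∀ m ∈ M, 0 ≤ L m) {f : A} {c : ℝ} (hc : 0 < c)
    (hf : algebraMap ℝ A c - f ^ 2 ∈ M) {m : A} (hm : m ∈ M) :
    L (f ^ 2 * m) ≤ c * L m := by
  have hLsq (q : A) : 0 ≤ L (q ^ 2) := hL _ (sq_mem h1 q)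
  have hlog (k : ℕ) : L ((f ^ (k + 1)) ^ 2 * m) ^ 2 ≤
      L ((f ^ k) ^ 2 * m) * L ((f ^ (k + 2)) ^ 2 * m) := by
    convert sq_map_mul_mul_le (fun q => hL _ (sq_mul_mem hm q)) (f ^ k) (f ^ (k + 2)) using 4
    ring
  have hgrowth (k : ℕ) : L ((f ^ k) ^ 2 * m) ≤ √(L (m ^ 2) * L 1) * c ^ k := by
    rw [← Real.sqrt_sq (pow_nonneg hc.le k), ← Real.sqrt_mul (mul_nonneg (hLsq m) ?_)]
    · refine Real.le_sqrt_of_sq_le ?_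
      calc L ((f ^ k) ^ 2 * m) ^ 2
          ≤ L (((f ^ k) ^ 2) ^ 2) * L (m ^ 2) := sq_map_mul_le hLsq _ _
        _ = L ((f ^ (k * 2)) ^ 2) * L (m ^ 2) := by rw [← pow_mul f k 2]
        _ ≤ c ^ (k * 2) * L 1 * L (m ^ 2) :=
            mul_le_mul_of_nonneg_right (map_pow_sq_le hL hc.le hf _) (hLsq m)
        _ = L (m ^ 2) * L 1 * (c ^ k) ^ 2 := by ring
    · exact hL 1 h1
  simpa using le_mul_of_sq_le_mul_of_le_pow hc (fun k => hL _ (sq_mul_mem hm (f ^ k)))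
    hlog hgrowth

end PositiveFunctional

section StateSpace

variable {A : Type*} [CommRing A] [Algebra ℝ A] {M : Submodule (Subsemiring.sumSq A) A}

/-- The states of `M`: linear functionals that are nonnegative on `M` and equal to `1` at `1`.
They are taken as bare functions, so that the product topology of `A → ℝ` applies. -/
def stateSpace (M : Submodule (Subsemiring.sumSq A) A) : Set (A → ℝ) :=
  {φ | ∃ L : A →ₗ[ℝ] ℝ, (∀ m ∈ M, 0 ≤ L m) ∧ L 1 = 1 ∧ ⇑L = φ}

lemma coe_mem_stateSpace {L : A →ₗ[ℝ] ℝ} :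
    ⇑L ∈ stateSpace M ↔ (∀ m ∈ M, 0 ≤ L m) ∧ L 1 = 1 := by
  refine ⟨?_, fun h => ⟨L, h.1, h.2, rfl⟩⟩
  rintro ⟨L', hL', hone, heq⟩
  rwa [← DFunLike.coe_injective heq, and_iff_left hone]

lemma coe_inv_smul_mem_stateSpace (h1 : 1 ∈ M) {L : A →ₗ[ℝ] ℝ} (hL : ∀ m ∈ M, 0 ≤ L m)
    (hne : L 1 ≠ 0) : ⇑((L 1)⁻¹ • L) ∈ stateSpace M :=
  coe_mem_stateSpace.2
    ⟨fun m hm => mul_nonneg (inv_nonneg.2 (hL 1 h1)) (hL m hm), inv_mul_cancel₀ hne⟩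

lemma convex_stateSpace : Convex ℝ (stateSpace M) := by
  rintro _ ⟨P, hP, hPone, rfl⟩ _ ⟨Q, hQ, hQone, rfl⟩ a b ha hb hab
  refine ⟨a • P + b • Q, fun m hm => ?_, ?_, rfl⟩
  · exact add_nonneg (mul_nonneg ha (hP m hm)) (mul_nonneg hb (hQ m hm))
  · simp [hPone, hQone, hab]

lemma isClosed_stateSpace : IsClosed (stateSpace M) := by
  have heq : stateSpace M = range ((↑) : (A →ₗ[ℝ] ℝ) → A → ℝ) ∩
      {φ | (∀ m ∈ M, 0 ≤ φ m) ∧ φ 1 = 1} := by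
    ext φ
    constructor
    · rintro ⟨L, hL, hone, rfl⟩
      exact ⟨⟨L, rfl⟩, hL, hone⟩
    · rintro ⟨⟨L, rfl⟩, hL⟩
      exact coe_mem_stateSpace.2 hL
  rw [heq]
  refine (LinearMap.isClosed_range_coe A ℝ (RingHom.id ℝ)).inter (IsClosed.and ?_ ?_)
  · simp only [ofPred_forall]
    exact isClosed_biInter fun m _ => isClosed_le continuous_const (continuous_apply m)
  · exact isClosed_eq (continuous_apply 1) continuous_const

lemma isCompact_stateSpace (h1 : 1 ∈ M) (hM : boundedSubalgebra M h1 = ⊤) :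
    IsCompact (stateSpace M) := by
  choose c hc hbound using fun f : A => mem_boundedSubalgebra.1 (hM ▸ Algebra.mem_top (x := f))
  refine (isCompact_univ_pi fun f => isCompact_Icc (a := -√(c f)) (b := √(c f))).of_isClosed_subset
    isClosed_stateSpace ?_
  rintro _ ⟨L, hL, hone, rfl⟩ f _
  have hsq : L f ^ 2 ≤ c f :=
    calc L f ^ 2 ≤ L (f ^ 2) := by
          simpa [hone] using sq_map_mul_le (fun q => hL _ (sq_mem h1 q)) f 1
      _ ≤ c f := by simpa [hone] using map_pow_sq_le hL (hc f).le (hbound f) 1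
  exact abs_le.1 (Real.abs_le_sqrt hsq)

lemma eq_smul_of_mem_extremePoints (h1 : 1 ∈ M) {L P : A →ₗ[ℝ] ℝ}
    (hL : ⇑L ∈ (stateSpace M).extremePoints ℝ) (hP : ∀ m ∈ M, 0 ≤ P m)
    (hPL : ∀ m ∈ M, P m ≤ L m) : P = P 1 • L := by
  have hone : L 1 = 1 := (coe_mem_stateSpace.1 hL.1).2
  have hQ : ∀ m ∈ M, 0 ≤ (L - P) m := fun m hm => sub_nonneg.2 (hPL m hm)
  have hQone : (L - P) 1 = 1 - P 1 := by rw [LinearMap.sub_apply, hone]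
  rcases eq_or_ne (P 1) 0 with hP0 | hP0
  · rw [hP0, zero_smul]
    exact eq_zero_of_map_one_eq_zero (fun q => hP _ (sq_mem h1 q)) hP0
  rcases eq_or_ne ((L - P) 1) 0 with hQ0 | hQ0
  · have hzero := eq_zero_of_map_one_eq_zero (fun q => hQ _ (sq_mem h1 q)) hQ0
    rw [← sub_eq_zero.1 hzero, hone, one_smul]
  have hseg : ⇑L ∈ openSegment ℝ ⇑((P 1)⁻¹ • P) ⇑(((L - P) 1)⁻¹ • (L - P)) := by
    refine ⟨P 1, (L - P) 1, (hP 1 h1).lt_of_ne' hP0, (hQ 1 h1).lt_of_ne' hQ0, ?_, ?_⟩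
    · rw [hQone, add_sub_cancel]
    · rw [LinearMap.coe_smul, LinearMap.coe_smul, smul_inv_smul₀ hP0, smul_inv_smul₀ hQ0]
      ext a
      simp
  have heq := hL.2 (coe_inv_smul_mem_stateSpace h1 hP hP0)
    (coe_inv_smul_mem_stateSpace h1 hQ hQ0) hseg
  rw [← DFunLike.coe_injective heq, smul_inv_smul₀ hP0]

lemma map_sq_mul_of_mem_extremePoints (h1 : 1 ∈ M) {L : A →ₗ[ℝ] ℝ}
    (hL : ⇑L ∈ (stateSpace M).extremePoints ℝ) {f : A} (hf : f ∈ boundedSubalgebra M h1) (g : A) :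
    L (f ^ 2 * g) = L (f ^ 2) * L g := by
  obtain ⟨c, hc, hbound⟩ := mem_boundedSubalgebra.1 hf
  have hLpos := (coe_mem_stateSpace.1 hL.1).1
  have heq := eq_smul_of_mem_extremePoints h1 hL
    (P := c⁻¹ • L ∘ₗ LinearMap.mulLeft ℝ (f ^ 2))
    (fun m hm => mul_nonneg (inv_nonneg.2 hc.le) (hLpos _ (sq_mul_mem hm f)))
    (fun m hm => (inv_mul_le_iff₀ hc).2 (map_sq_mul_le h1 hLpos hc hbound hm))
  have hg : c⁻¹ * L (f ^ 2 * g) = c⁻¹ * L (f ^ 2) * L g := by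
    simpa using DFunLike.congr_fun heq g
  rw [mul_assoc] at hg
  exact mul_left_cancel₀ (inv_ne_zero hc.ne') hg

lemma map_mul_of_mem_extremePoints (h1 : 1 ∈ M) (hM : boundedSubalgebra M h1 = ⊤)
    {L : A →ₗ[ℝ] ℝ} (hL : ⇑L ∈ (stateSpace M).extremePoints ℝ) (f g : A) :
    L (f * g) = L f * L g := by
  have hsq (f : A) : L (f ^ 2 * g) = L (f ^ 2) * L g :=
    map_sq_mul_of_mem_extremePoints h1 hL (hM ▸ Algebra.mem_top) g
  have hone : L 1 = 1 := (coe_mem_stateSpace.1 hL.1).2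
  have hsucc := hsq (f + 1)
  rw [show (f + 1) ^ 2 = f ^ 2 + (f + f) + 1 by ring] at hsucc
  simp only [add_mul, map_add, one_mul, hone, hsq f] at hsucc
  linarith

theorem map_nonneg_of_forall_algHom (h1 : 1 ∈ M) (hM : boundedSubalgebra M h1 = ⊤)
    {L : A →ₗ[ℝ] ℝ} (hL : ∀ m ∈ M, 0 ≤ L m) {f : A}
    (hf : ∀ χ : A →ₐ[ℝ] ℝ, (∀ m ∈ M, 0 ≤ χ m) → 0 ≤ χ f) : 0 ≤ L f := by
  have hstates : stateSpace M ⊆ {φ | 0 ≤ φ f} := by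
    rw [← closure_convexHull_extremePoints (isCompact_stateSpace h1 hM) convex_stateSpace]
    refine closure_minimal (convexHull_min ?_ ?_)
      (isClosed_le continuous_const (continuous_apply f))
    · intro φ hφ
      obtain ⟨P, hP, hone, rfl⟩ := hφ.1
      exact hf (AlgHom.ofLinearMap P hone (map_mul_of_mem_extremePoints h1 hM hφ)) hP
    · exact convex_halfSpace_ge (LinearMap.proj (R := ℝ) (φ := fun _ : A => ℝ) f).isLinear 0
  rcases (hL 1 h1).eq_or_lt with hzero | hpos
  · simp [eq_zero_of_map_one_eq_zero (fun q => hL _ (sq_mem h1 q)) hzero.symm]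
  · exact (mul_nonneg_iff_of_pos_left (inv_pos.2 hpos)).1
      (hstates (coe_inv_smul_mem_stateSpace h1 hL hpos.ne'))

end StateSpace

section RepresentingMeasure

lemma exists_positive_extension {V E : Type*} [AddCommGroup V] [Module ℝ V] [AddCommGroup E]
    [PartialOrder E] [IsOrderedAddMonoid E] [Module ℝ E] [PosSMulMono ℝ E]
    (e : V →ₗ[ℝ] E) (he : ∀ y, ∃ v, y ≤ e v) {L : V →ₗ[ℝ] ℝ} (hL : ∀ v, 0 ≤ e v → 0 ≤ L v) :
    ∃ Λ : E →ₚ[ℝ] ℝ, ∀ v, Λ (e v) = L v := by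
  obtain ⟨L', rfl⟩ : L ∈ LinearMap.range e.dualMap := by
    rw [LinearMap.range_dualMap_eq_dualAnnihilator_ker, Submodule.mem_dualAnnihilator]
    intro v hv
    rw [LinearMap.mem_ker] at hv
    refine le_antisymm ?_ (hL v hv.ge)
    simpa using hL (-v) (by simp [hv])
  obtain ⟨g, hg, hgpos⟩ := riesz_extension (PointedCone.positive ℝ E)
    ⟨LinearMap.range e, L' ∘ₗ Submodule.subtype _⟩
    (by rintro ⟨_, v, rfl⟩ hv; exact hL v hv)
    (fun y => by
      obtain ⟨v, hv⟩ := he (-y)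
      exact ⟨⟨e v, v, rfl⟩, neg_le_iff_add_nonneg.1 hv⟩)
  exact ⟨PositiveLinearMap.mk₀ g hgpos, fun v => hg ⟨e v, v, rfl⟩⟩

lemma exists_measure_integral_eq {Y : Type*} [TopologicalSpace Y] [CompactSpace Y] [T2Space Y]
    [MeasurableSpace Y] [BorelSpace Y] (Λ : C(Y, ℝ) →ₚ[ℝ] ℝ) :
    ∃ μ : Measure Y, IsFiniteMeasure μ ∧ ∀ φ : C(Y, ℝ), ∫ y, φ y ∂μ = Λ φ := by
  let Λc : CompactlySupportedContinuousMap Y ℝ →ₚ[ℝ] ℝ := PositiveLinearMap.mk₀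
    { toFun := fun φ => Λ φ.toContinuousMap
      map_add' := fun φ ψ => map_add Λ φ.toContinuousMap ψ.toContinuousMap
      map_smul' := fun c φ => map_smul Λ c φ.toContinuousMap }
    (fun _ hφ => Λ.map_nonneg hφ)
  exact ⟨RealRMK.rieszMeasure Λc, inferInstance, fun φ =>
    RealRMK.integral_rieszMeasure Λc (CompactlySupportedContinuousMap.continuousMapEquiv φ)⟩

end RepresentingMeasure

section Polynomial

variable {σ : Type*}

/-- Restriction of polynomial functions to a set `K`, as a linear map into `C(K, ℝ)`. -/
def restrictEval (K : Set (σ → ℝ)) : MvPolynomial σ ℝ →ₗ[ℝ] C(K, ℝ) where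
  toFun q := ⟨fun v => eval v.1 q, (continuous_eval q).comp continuous_subtype_val⟩
  map_add' q r := by ext; simp
  map_smul' c q := by ext; simp [smul_eval]

@[simp]
lemma restrictEval_apply (K : Set (σ → ℝ)) (q : MvPolynomial σ ℝ) (v : K) :
    restrictEval K q v = eval v.1 q :=
  rfl

theorem exists_measure_of_nonneg_on_isCompact [Countable σ] {K : Set (σ → ℝ)} (hK : IsCompact K)
    {L : MvPolynomial σ ℝ →ₗ[ℝ] ℝ} (hL : ∀ q, (∀ v ∈ K, 0 ≤ eval v q) → 0 ≤ L q) :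
    ∃ μ : Measure (σ → ℝ), IsFiniteMeasure μ ∧ μ Kᶜ = 0 ∧
      ∀ q, L q = ∫ v in K, eval v q ∂μ := by
  have : CompactSpace K := isCompact_iff_compactSpace.1 hK
  have hcofinal (φ : C(K, ℝ)) : ∃ q, φ ≤ restrictEval K q :=
    ⟨C ‖φ‖, fun v => by simpa using (le_abs_self _).trans (φ.norm_coe_le_norm v)⟩
  obtain ⟨Λ, hΛ⟩ := exists_positive_extension (restrictEval K) hcofinal
    (fun q hq => hL q fun v hv => hq ⟨v, hv⟩)
  obtain ⟨μ, hμ, hint⟩ := exists_measure_integral_eq Λ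
  refine ⟨μ.map (↑), inferInstance, ?_, fun q => ?_⟩
  · rw [Measure.map_apply measurable_subtype_coe hK.measurableSet.compl]
    simp
  · rw [(MeasurableEmbedding.subtype_coe hK.measurableSet).setIntegral_map,
      Subtype.coe_preimage_self, Measure.restrict_univ, ← hΛ, ← hint]
    rfl

/-- The Riesz functional `∑ q_d x^d ↦ ∑ q_d s_d` of a multi-indexed sequence `s`. -/
def rieszFunctional (s : (σ →₀ ℕ) → ℝ) : MvPolynomial σ ℝ →ₗ[ℝ] ℝ :=
  (basisMonomials σ ℝ).constr ℝ s

lemma rieszFunctional_monomial (s : (σ →₀ ℕ) → ℝ) (d : σ →₀ ℕ) :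
    rieszFunctional s (monomial d 1) = s d := by
  simpa only [rieszFunctional, coe_basisMonomials] using (basisMonomials σ ℝ).constr_basis ℝ s d

lemma rieszFunctional_eq_integral {s : (σ →₀ ℕ) → ℝ} {μ : Measure (σ → ℝ)}
    (hint : ∀ q, Integrable (fun v => eval v q) μ)
    (hs : ∀ d, s d = ∫ v, eval v (monomial d (1 : ℝ)) ∂μ) (q : MvPolynomial σ ℝ) :
    rieszFunctional s q = ∫ v, eval v q ∂μ := by
  let I : MvPolynomial σ ℝ →ₗ[ℝ] ℝ :=
    { toFun := fun q => ∫ v, eval v q ∂μ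
      map_add' := fun q r => by simpa only [map_add] using integral_add (hint q) (hint r)
      map_smul' := fun c q => by
        simpa only [smul_eval, RingHom.id_apply, smul_eq_mul] using
          integral_const_mul c fun v => eval v q }
  have heq : rieszFunctional s = I := by
    refine (basisMonomials σ ℝ).ext fun d => ?_
    rw [coe_basisMonomials, rieszFunctional_monomial, hs]
    rfl
  exact DFunLike.congr_fun heq q

variable {ι : Type*}

/-- The set `{v | h k v ≥ 0 for all k}` cut out by a family `h` of polynomials. -/
def nonnegSet (h : ι → MvPolynomial σ ℝ) : Set (σ → ℝ) :=
  {v | ∀ k, 0 ≤ eval v (h k)}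

variable {h : ι → MvPolynomial σ ℝ}

lemma isClosed_nonnegSet : IsClosed (nonnegSet h) := by
  rw [nonnegSet, ofPred_forall]
  exact isClosed_iInter fun k => isClosed_le continuous_const (continuous_eval _)

lemma mem_nonnegSet_iff {v : σ → ℝ} :
    v ∈ nonnegSet h ↔ ∀ m ∈ quadraticModule h, 0 ≤ eval v m := by
  refine ⟨fun hv => ?_, fun hv k => hv _ (mem_quadraticModule h k)⟩
  refine (forall_mem_quadraticModule_nonneg_iff (L := (aeval v).toLinearMap)).2
    ⟨fun q => ?_, fun k q => ?_⟩
  · simpa using sq_nonneg (eval v q)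
  · simpa using mul_nonneg (hv k) (sq_nonneg (eval v q))

variable [Fintype σ] {N : ℝ}

lemma isCompact_nonnegSet (hN : C N - ∑ i, X i ^ 2 ∈ quadraticModule h) :
    IsCompact (nonnegSet h) := by
  refine (isCompact_univ_pi fun _ => isCompact_Icc (a := -√N) (b := √N)).of_isClosed_subset
    isClosed_nonnegSet fun v hv i _ => ?_
  have hsum : ∑ j, v j ^ 2 ≤ N := by simpa using mem_nonnegSet_iff.1 hv _ hN
  have hi : v i ^ 2 ≤ N :=
    (Finset.single_le_sum (fun j _ => sq_nonneg (v j)) (Finset.mem_univ i)).trans hsum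
  exact abs_le.1 (Real.abs_le_sqrt hi)

lemma X_mem_boundedSubalgebra {M : Submodule (Subsemiring.sumSq (MvPolynomial σ ℝ)) _} {h1 : 1 ∈ M}
    (hN : C N - ∑ i, X i ^ 2 ∈ M) (i : σ) : X i ∈ boundedSubalgebra M h1 := by
  classical
  refine ⟨|N| + 1, by positivity, ?_⟩
  have hgap : algebraMap ℝ (MvPolynomial σ ℝ) (|N| + 1 - N) ∈ M :=
    algebraMap_mem_of_nonneg h1 (by linarith [le_abs_self N])
  have hrest : ∑ j ∈ Finset.univ.erase i, X j ^ 2 ∈ M := M.sum_mem fun j _ => sq_mem h1 (X j)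
  convert M.add_mem (M.add_mem hN hgap) hrest using 1
  rw [← Finset.add_sum_erase _ _ (Finset.mem_univ i), algebraMap_eq, map_sub]
  ring

lemma boundedSubalgebra_eq_top {M : Submodule (Subsemiring.sumSq (MvPolynomial σ ℝ)) _} {h1 : 1 ∈ M}
    (hN : C N - ∑ i, X i ^ 2 ∈ M) : boundedSubalgebra M h1 = ⊤ := by
  rw [eq_top_iff, ← adjoin_range_X, Algebra.adjoin_le_iff]
  rintro _ ⟨i, rfl⟩
  exact X_mem_boundedSubalgebra hN i

theorem map_nonneg_of_nonneg_on_nonnegSet (hN : C N - ∑ i, X i ^ 2 ∈ quadraticModule h)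
    {L : MvPolynomial σ ℝ →ₗ[ℝ] ℝ} (hL : ∀ m ∈ quadraticModule h, 0 ≤ L m) {q : MvPolynomial σ ℝ}
    (hq : ∀ v ∈ nonnegSet h, 0 ≤ eval v q) : 0 ≤ L q := by
  refine map_nonneg_of_forall_algHom (one_mem_quadraticModule h) (boundedSubalgebra_eq_top hN) hL
    fun χ hχ => ?_
  obtain ⟨v, rfl⟩ : ∃ v, χ = aeval v := ⟨_, aeval_unique χ⟩
  exact hq v (mem_nonnegSet_iff.2 hχ)

theorem stmt10_general (hN : C N - ∑ i, X i ^ 2 ∈ quadraticModule h) (s : (σ →₀ ℕ) → ℝ) :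
    (∃ μ : Measure (σ → ℝ), IsFiniteMeasure μ ∧ μ (nonnegSet h)ᶜ = 0 ∧
      ∀ d, s d = ∫ v in nonnegSet h, ∏ i, v i ^ d i ∂μ) ↔
    (∀ q, 0 ≤ rieszFunctional s (q ^ 2)) ∧ ∀ k q, 0 ≤ rieszFunctional s (h k * q ^ 2) := by
  have hK := isCompact_nonnegSet hN
  have hmonomial (v : σ → ℝ) (d : σ →₀ ℕ) : eval v (monomial d (1 : ℝ)) = ∏ i, v i ^ d i := by
    rw [eval_monomial, one_mul, Finsupp.prod_fintype _ _ fun i => pow_zero (v i)]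
  rw [← forall_mem_quadraticModule_nonneg_iff]
  constructor
  · rintro ⟨μ, _, -, hs⟩ m hm
    have hint (q : MvPolynomial σ ℝ) :
        Integrable (fun v => eval v q) (μ.restrict (nonnegSet h)) :=
      (continuous_eval q).continuousOn.integrableOn_compact hK
    rw [rieszFunctional_eq_integral hint (by simpa only [hmonomial] using hs)]
    exact setIntegral_nonneg hK.measurableSet fun v hv => mem_nonnegSet_iff.1 hv m hm
  · intro hpos
    obtain ⟨μ, hμ, hsupp, hrep⟩ := exists_measure_of_nonneg_on_isCompact hK
      fun q => map_nonneg_of_nonneg_on_nonnegSet hN hpos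
    refine ⟨μ, hμ, hsupp, fun d => ?_⟩
    rw [← rieszFunctional_monomial s d, hrep]
    simp only [hmonomial]

end Polynomial

section TwoBlocks

variable {n p : ℕ}

lemma Lz_eq_rieszFunctional (z : (Fin n → ℕ) → (Fin p → ℕ) → ℝ)
    (q : MvPolynomial (Fin n ⊕ Fin p) ℝ) :
    Lz n p z q =
      rieszFunctional (fun d => z (fun k => d (Sum.inl k)) fun l => d (Sum.inr l)) q := by
  rw [rieszFunctional, Module.Basis.constr_apply]
  rfl

lemma ArchimedeanQM.exists_mem_quadraticModule {ι : Type*} [Fintype ι]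
    {h : ι → MvPolynomial (Fin n ⊕ Fin p) ℝ} (harch : ArchimedeanQM n p h) :
    ∃ N : ℝ, C N - ∑ i, X i ^ 2 ∈ quadraticModule h := by
  obtain ⟨N, σ₀, τ, hσ₀, hτ, heq⟩ := harch
  have hmem {a g : MvPolynomial (Fin n ⊕ Fin p) ℝ} (ha : IsSumSq a) (hg : g ∈ quadraticModule h) :
      a * g ∈ quadraticModule h :=
    (quadraticModule h).smul_mem ⟨a, by simpa using ha⟩ hg
  refine ⟨N, heq ▸ add_mem ?_ (sum_mem fun j _ => hmem (hτ j) (mem_quadraticModule h j))⟩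
  simpa using hmem hσ₀ (one_mem_quadraticModule h)

lemma exists_measure_prod_iff (S : Set (Fin n ⊕ Fin p → ℝ))
    (z : (Fin n → ℕ) → (Fin p → ℕ) → ℝ) :
    (∃ μ : Measure ((Fin n → ℝ) × (Fin p → ℝ)), IsFiniteMeasure μ ∧
      μ {w | Sum.elim w.1 w.2 ∈ S}ᶜ = 0 ∧ ∀ α β, z α β =
        ∫ w in {w | Sum.elim w.1 w.2 ∈ S}, (∏ k, w.1 k ^ α k) * ∏ l, w.2 l ^ β l ∂μ) ↔
    ∃ μ : Measure (Fin n ⊕ Fin p → ℝ), IsFiniteMeasure μ ∧ μ Sᶜ = 0 ∧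
      ∀ d : Fin n ⊕ Fin p →₀ ℕ, z (fun k => d (Sum.inl k)) (fun l => d (Sum.inr l)) =
        ∫ v in S, ∏ i, v i ^ d i ∂μ := by
  let e := MeasurableEquiv.sumPiEquivProdPi fun _ : Fin n ⊕ Fin p => ℝ
  have hsurj : Function.Surjective (Measure.map e) := fun μ => ⟨μ.map e.symm, e.map_map_symm⟩
  have hpre : e ⁻¹' {w | Sum.elim w.1 w.2 ∈ S} = S := by
    ext v
    change Sum.elim (v ∘ Sum.inl) (v ∘ Sum.inr) ∈ S ↔ v ∈ S
    rw [Sum.elim_comp_inl_inr]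
  have hint (μ : Measure (Fin n ⊕ Fin p → ℝ)) (d : Fin n ⊕ Fin p → ℕ) :
      ∫ w in {w | Sum.elim w.1 w.2 ∈ S},
        (∏ k, w.1 k ^ d (Sum.inl k)) * ∏ l, w.2 l ^ d (Sum.inr l) ∂μ.map e =
      ∫ v in S, ∏ i, v i ^ d i ∂μ := by
    rw [e.measurableEmbedding.setIntegral_map, hpre]
    simp only [Fintype.prod_sum_type]
    rfl
  rw [hsurj.exists]
  refine exists_congr fun μ => and_congr ?_ (and_congr ?_ ?_)
  · exact Measure.isFiniteMeasure_map_iff e.measurable.aemeasurable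
  · rw [e.map_apply, preimage_compl, hpre]
  · refine ⟨fun hz d => (hz _ _).trans (hint μ d), fun hz α β => ?_⟩
    have := hz (Finsupp.equivFunOnFinite.symm (Sum.elim α β))
    rw [← hint] at this
    exact this

end TwoBlocks

/-- Putinar-type moment problem: under the Archimedean assumption, a
sequence `z` has a representing finite Borel measure supported on `K` iff all moment
matrices `M_i(z)` and localizing matrices `M_i(h_k z)` are positive semidefinite;
positive semidefiniteness of `M_i(z)` (resp. `M_i(h_k z)`) for all `i` is expressed
through nonnegativity of the quadratic forms `c ↦ cᵀ M_i(z) c = L_z(q²)`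
(resp. `L_z(h_k q²)`), `q` ranging over all polynomials. -/
theorem stmt10 (n p t : ℕ)
    (hs : Fin t → MvPolynomial (Fin n ⊕ Fin p) ℝ)
    (harch : ArchimedeanQM n p hs)
    (K : Set ((Fin n → ℝ) × (Fin p → ℝ)))
    (hKdef : K = {w | ∀ k, 0 ≤ eval (Sum.elim w.1 w.2) (hs k)})
    (z : (Fin n → ℕ) → (Fin p → ℕ) → ℝ) :
    (∃ μ : Measure ((Fin n → ℝ) × (Fin p → ℝ)), IsFiniteMeasure μ ∧ μ Kᶜ = 0 ∧
      ∀ (α : Fin n → ℕ) (β : Fin p → ℕ),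
        z α β = ∫ w in K, (∏ k, w.1 k ^ α k) * ∏ l, w.2 l ^ β l ∂μ)
    ↔
    ((∀ q : MvPolynomial (Fin n ⊕ Fin p) ℝ, 0 ≤ Lz n p z (q ^ 2)) ∧
      ∀ k, ∀ q : MvPolynomial (Fin n ⊕ Fin p) ℝ, 0 ≤ Lz n p z (hs k * q ^ 2)) := by
  obtain ⟨N, hN⟩ := harch.exists_mem_quadraticModule
  subst hKdef
  simp only [Lz_eq_rieszFunctional]
  exact (exists_measure_prod_iff (nonnegSet hs) z).trans (stmt10_general hN _)
end
end

section
/- Under the polynomial parametric setting and the Archimedean assumption, assume K_y is nonempty for every y ∈ Y. For each i ≥ i_0 let (p_i, (σ^i_j)) be a nearly optimal feasible solution of the i-th dual semidefinite relaxation with ∫_Y p_i dφ ≥ ρ*_i − 1/i. Then p_i(y) ≤ J(y) for every y ∈ Y, lim_{i→∞} ∫_Y (J(y) − p_i(y)) dφ(y) = 0, and, defining p̃_0 := p_0 and p̃_i(y) := max(p̃_{i−1}(y), p_i(y)), the sequence p̃_i converges to J almost uniformly on Y with respect to φ. -/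
open MeasureTheory MvPolynomial Filter Topology Set

noncomputable section

/-- Every monomial `x^α y^β` of `q` satisfies `|α| ≤ i` and `|β| ≤ i`, i.e. `q` is in the
span of the monomial basis indexing the moment matrix `M_i`. -/
def DegOK (n p : ℕ) (i : ℕ) (q : MvPolynomial (Fin n ⊕ Fin p) ℝ) : Prop :=
  ∀ d ∈ q.support, (∑ k, d (Sum.inl k)) ≤ i ∧ (∑ l, d (Sum.inr l)) ≤ i

/-- `⌈deg h / 2⌉`. -/
def halfDeg {σ : Type*} (h : MvPolynomial σ ℝ) : ℕ := (h.totalDegree + 1) / 2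

/-- Feasibility of the sequence `z` for the `i`-th moment relaxation:
`M_i(z) ⪰ 0`, `M_{i-v_j}(h_j z) ⪰ 0` for all `j`, and `L_z(y^β) = γ_β` for `|β| ≤ 2i`.
Positive semidefiniteness of the moment (resp. localizing) matrix is expressed through
nonnegativity of the associated quadratic forms `c ↦ cᵀ M_i(z) c = L_z(q²)`
(resp. `cᵀ M_{i-v_j}(h_j z) c = L_z(h_j q²)`), `q` ranging over the polynomials spanned
by the monomials indexing the matrix. -/
def RelaxFeasible (n p : ℕ) {ι : Type*} [Fintype ι]
    (H : ι → MvPolynomial (Fin n ⊕ Fin p) ℝ)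
    (γ : (Fin p → ℕ) → ℝ) (i : ℕ)
    (z : (Fin n → ℕ) → (Fin p → ℕ) → ℝ) : Prop :=
  (∀ q, DegOK n p i q → 0 ≤ Lz n p z (q ^ 2)) ∧
  (∀ j, ∀ q, DegOK n p (i - halfDeg (H j)) q → 0 ≤ Lz n p z (H j * q ^ 2)) ∧
  (∀ β : Fin p → ℕ, (∑ l, β l) ≤ 2 * i → z (fun _ => 0) β = γ β)

/-- Optimal value `ρ_i` of the `i`-th (primal) semidefinite relaxation. -/
def rhoSDP (n p : ℕ) {ι : Type*} [Fintype ι]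
    (H : ι → MvPolynomial (Fin n ⊕ Fin p) ℝ)
    (γ : (Fin p → ℕ) → ℝ) (f : MvPolynomial (Fin n ⊕ Fin p) ℝ) (i : ℕ) : ℝ :=
  sInf {r | ∃ z, RelaxFeasible n p H γ i z ∧ r = Lz n p z f}

/-- Evaluation of a polynomial in `(x, y)` at a point of `ℝ^n × ℝ^p`. -/
def evalXY (n p : ℕ) (q : MvPolynomial (Fin n ⊕ Fin p) ℝ)
    (w : (Fin n → ℝ) × (Fin p → ℝ)) : ℝ :=
  eval (Sum.elim w.1 w.2) q

/-- Optimal value `ρ` of the infinite-dimensional problem `P`: the infimum of `∫_K f dμ`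
over finite Borel measures `μ` on `K` whose marginal on `ℝ^p` is `φ`. -/
def rhoP (n p : ℕ) (f : MvPolynomial (Fin n ⊕ Fin p) ℝ)
    (K : Set ((Fin n → ℝ) × (Fin p → ℝ))) (φ : Measure (Fin p → ℝ)) : ℝ :=
  sInf {r | ∃ μ : Measure ((Fin n → ℝ) × (Fin p → ℝ)),
    IsFiniteMeasure μ ∧ μ Kᶜ = 0 ∧ μ.map Prod.snd = φ ∧
    r = ∫ w in K, evalXY n p f w ∂μ}

/-- `i₀ := max(⌈deg f / 2⌉, max_j ⌈deg h_j / 2⌉)`. -/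
def iZero (n p : ℕ) {ι : Type*} [Fintype ι]
    (H : ι → MvPolynomial (Fin n ⊕ Fin p) ℝ)
    (f : MvPolynomial (Fin n ⊕ Fin p) ℝ) : ℕ :=
  max (halfDeg f) (Finset.univ.sup fun j => halfDeg (H j))

/-- Optimal value `ρ*_i` of the `i`-th dual semidefinite relaxation. -/
def rhoSDPdual (n p : ℕ) {ι : Type*} [Fintype ι]
    (H : ι → MvPolynomial (Fin n ⊕ Fin p) ℝ)
    (f : MvPolynomial (Fin n ⊕ Fin p) ℝ)
    (Y : Set (Fin p → ℝ)) (φ : Measure (Fin p → ℝ)) (i : ℕ) : ℝ :=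
  sSup {r | ∃ (pol : MvPolynomial (Fin p) ℝ)
      (σ0 : MvPolynomial (Fin n ⊕ Fin p) ℝ)
      (σ : ι → MvPolynomial (Fin n ⊕ Fin p) ℝ),
    IsSumSq σ0 ∧ (∀ j, IsSumSq (σ j)) ∧
    f - rename Sum.inr pol = σ0 + ∑ j, σ j * H j ∧
    pol.totalDegree ≤ 2 * i ∧ σ0.totalDegree ≤ 2 * i ∧
    (∀ j, (σ j * H j).totalDegree ≤ 2 * i) ∧
    r = ∫ y in Y, eval y pol ∂φ}

/-!
A polynomial `q` with `q < J` on `Y` satisfies `f - q > 0` on `K`, so by Putinar's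
Positivstellensatz `f - q` lies in the quadratic module generated by the constraints; its
certificate has some finite degree, so `q` is feasible for every sufficiently late relaxation. Such
`q` exist with `∫ q` arbitrarily close to `∫ J`: the Lipschitz regularisations of `J` are
continuous, lie below `J` and converge to it pointwise, and Stone–Weierstrass turns them into
polynomials. Conversely a feasible `q` lies below `J`. Hence the dual values converge to `∫ J`, and
so do the integrals of nearly optimal solutions. Their running maxima increase, stay below `J` and
have integrals converging to `∫ J`, so they converge to `J` almost everywhere, and Egorov's theorem
applies.

The Positivstellensatz is obtained from characters. If `f` is positive at all characters
nonnegative on the module `Q`, no maximal quadratic module contains both `Q` and `-f`: dividing by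
the ideal of infinitesimals of an Archimedean maximal module leaves `ℝ`, so such a module comes
from a character. Therefore `s * f - 1 ∈ Q` for a sum of squares `s`, and then from `f + r ∈ Q` one
can lower `r` by a fixed amount as long as `r ≥ 0`, which forces `f ∈ Q`.
-/

/-- The subsets of `A` closed under addition and under multiplication by sums of squares. Such a
`Q` is a *quadratic module* of `A` when moreover `1 ∈ Q`, which is kept as a separate hypothesis. -/
abbrev SumSqModule (A : Type*) [CommRing A] : Type _ := Submodule (Subsemiring.sumSq A) A

namespace SumSqModule

section Basic

variable {A : Type*} [CommRing A] {Q : SumSqModule A} {a : A}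

theorem isSumSq_mul_mem {s : A} (hs : IsSumSq s) (ha : a ∈ Q) : s * a ∈ Q :=
  Q.smul_mem ⟨s, Subsemiring.mem_sumSq.2 hs⟩ ha

theorem isSumSq_mem (h1 : 1 ∈ Q) {s : A} (hs : IsSumSq s) : s ∈ Q := by
  simpa only [mul_one] using isSumSq_mul_mem hs h1

theorem mul_self_mul_mem (c : A) (ha : a ∈ Q) : c * c * a ∈ Q :=
  isSumSq_mul_mem (IsSumSq.mul_self c) ha

theorem mul_self_mem (h1 : 1 ∈ Q) (c : A) : c * c ∈ Q :=
  isSumSq_mem h1 (IsSumSq.mul_self c)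

theorem mem_sup_span_singleton {b : A} :
    b ∈ Q ⊔ Submodule.span _ {a} ↔ ∃ q ∈ Q, ∃ s, IsSumSq s ∧ q + s * a = b := by
  simp [Submodule.mem_sup, Submodule.mem_span_singleton, Subsemiring.smul_def]

/-- The quadratic module generated by `S`. -/
def generated (S : Set A) : SumSqModule A :=
  Submodule.span _ (insert 1 S)

theorem one_mem_generated (S : Set A) : 1 ∈ generated S :=
  Submodule.subset_span (mem_insert 1 S)

theorem mem_generated_range {ι : Type*} [Fintype ι] {H : ι → A} :
    a ∈ generated (range H) ↔
      ∃ (σ₀ : A) (σ : ι → A), IsSumSq σ₀ ∧ (∀ j, IsSumSq (σ j)) ∧ a = σ₀ + ∑ j, σ j * H j := by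
  simp only [generated, Submodule.mem_span_insert, Submodule.mem_span_range_iff_exists_fun,
    Subsemiring.smul_def, smul_eq_mul, mul_one]
  constructor
  · rintro ⟨σ₀, _, ⟨σ, rfl⟩, rfl⟩
    exact ⟨σ₀, fun j => σ j, Subsemiring.mem_sumSq.1 σ₀.2,
      fun j => Subsemiring.mem_sumSq.1 (σ j).2, rfl⟩
  · rintro ⟨σ₀, σ, h₀, hσ, rfl⟩
    exact ⟨⟨σ₀, Subsemiring.mem_sumSq.2 h₀⟩, _,
      ⟨fun j => ⟨σ j, Subsemiring.mem_sumSq.2 (hσ j)⟩, rfl⟩, rfl⟩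

theorem map_nonneg_of_isSumSq {R : Type*} [CommRing R] [LinearOrder R] [IsStrictOrderedRing R]
    (α : A →+* R) {s : A} (hs : IsSumSq s) : 0 ≤ α s := by
  induction hs with
  | zero => rw [map_zero]
  | sq_add c _ ih => rw [map_add, map_mul]; exact add_nonneg (mul_self_nonneg _) ih

theorem map_nonneg_of_mem_generated {R : Type*} [CommRing R] [LinearOrder R]
    [IsStrictOrderedRing R] (α : A →+* R) {S : Set A} (hS : ∀ h ∈ S, 0 ≤ α h)
    (ha : a ∈ generated S) : 0 ≤ α a := by
  induction ha using Submodule.span_induction with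
  | mem h hh => exact hh.elim (fun h1 => h1 ▸ (map_one α).symm ▸ zero_le_one) (hS h)
  | zero => rw [map_zero]
  | add a b _ _ ha hb => exact map_add α a b ▸ add_nonneg ha hb
  | smul s a _ ha =>
    have hs : 0 ≤ α s := map_nonneg_of_isSumSq α (Subsemiring.mem_sumSq.1 s.2)
    simpa only [Subsemiring.smul_def, smul_eq_mul, map_mul] using mul_nonneg hs ha

end Basic

variable {A : Type*} [CommRing A] [Algebra ℝ A] {Q : SumSqModule A} {a : A}

theorem nonneg_smul_mem {r : ℝ} (hr : 0 ≤ r) (ha : a ∈ Q) : r • a ∈ Q := by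
  have h := mul_self_mul_mem (algebraMap ℝ A √r) ha
  rwa [← map_mul, Real.mul_self_sqrt hr, ← Algebra.smul_def] at h

theorem mem_of_pos_smul_mem {r : ℝ} (hr : 0 < r) (ha : r • a ∈ Q) : a ∈ Q := by
  simpa only [inv_smul_smul₀ hr.ne'] using nonneg_smul_mem (inv_nonneg.2 hr.le) ha

theorem algebraMap_mem (h1 : 1 ∈ Q) {r : ℝ} (hr : 0 ≤ r) : algebraMap ℝ A r ∈ Q := by
  simpa only [Algebra.algebraMap_eq_smul_one] using nonneg_smul_mem hr h1

theorem algebraMap_add_mem_of_le (h1 : 1 ∈ Q) {r s : ℝ} (hrs : r ≤ s)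
    (ha : algebraMap ℝ A r + a ∈ Q) : algebraMap ℝ A s + a ∈ Q := by
  convert Q.add_mem ha (algebraMap_mem h1 (sub_nonneg.2 hrs)) using 1
  algebra

theorem algebraMap_sub_mem_of_le (h1 : 1 ∈ Q) {r s : ℝ} (hrs : r ≤ s)
    (ha : algebraMap ℝ A r - a ∈ Q) : algebraMap ℝ A s - a ∈ Q := by
  rw [sub_eq_add_neg] at ha ⊢
  exact algebraMap_add_mem_of_le h1 hrs ha

section Maximal

theorem mul_mem_of_mem_of_neg_mem (ha : a ∈ Q) (hna : -a ∈ Q) (b : A) : b * a ∈ Q := by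
  refine mem_of_pos_smul_mem (four_pos : (0 : ℝ) < 4) ?_
  convert Q.add_mem (mul_self_mul_mem (b + 1) ha) (mul_self_mul_mem (b - 1) hna) using 1
  algebra

theorem eq_top_of_neg_one_mem (h1 : 1 ∈ Q) (hn1 : -1 ∈ Q) : Q = ⊤ :=
  Submodule.eq_top_iff'.2 fun b => mul_one b ▸ mul_mem_of_mem_of_neg_mem h1 hn1 b

-- Finiteness makes the lattice `SumSqModule A` coatomic: proper elements lie below maximal ones.
instance : Module.Finite (Subsemiring.sumSq A) A :=
  ⟨Submodule.fg_def.2 ⟨{1, -1}, toFinite _, eq_top_of_neg_one_mem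
    (Submodule.subset_span (mem_insert _ _))
    (Submodule.subset_span (mem_insert_of_mem _ (mem_singleton _)))⟩⟩

theorem mem_or_neg_mem_of_isCoatom (hQ : IsCoatom Q) (h1 : 1 ∈ Q) (a : A) : a ∈ Q ∨ -a ∈ Q := by
  by_contra! ⟨ha, hna⟩
  have neg_one_eq {b : A} (hb : b ∉ Q) : ∃ q ∈ Q, ∃ s, IsSumSq s ∧ q + s * b = -1 := by
    rw [← mem_sup_span_singleton, hQ.2 _ (Submodule.lt_sup_iff_notMem.2 hb)]
    exact Submodule.mem_top
  obtain ⟨q, hq, s, hs, hqs⟩ := neg_one_eq ha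
  obtain ⟨q', hq', s', hs', hqs'⟩ := neg_one_eq hna
  have neg_s_mem : -s ∈ Q := by
    convert Q.add_mem (Q.add_mem (isSumSq_mul_mem hs' hq) (isSumSq_mul_mem hs hq'))
      (isSumSq_mem h1 hs') using 1
    linear_combination -s' * hqs - s * hqs'
  have as_mem : a * s ∈ Q := mul_mem_of_mem_of_neg_mem (isSumSq_mem h1 hs) neg_s_mem a
  exact hQ.1 (eq_top_of_neg_one_mem h1 (hqs ▸ mul_comm a s ▸ Q.add_mem hq as_mem))

theorem nonneg_of_algebraMap_mem (h1 : 1 ∈ Q) (hQ : Q ≠ ⊤) {r : ℝ}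
    (hr : algebraMap ℝ A r ∈ Q) : 0 ≤ r := by
  by_contra! hneg
  refine hQ (eq_top_of_neg_one_mem h1 (mem_of_pos_smul_mem (neg_pos.2 hneg) ?_))
  rwa [Algebra.algebraMap_eq_smul_one, ← neg_smul_neg] at hr

end Maximal

/-- `Q` is an Archimedean quadratic module: every element of `A` is bounded above by a constant,
modulo `Q`. -/
structure IsArchimedean (Q : SumSqModule A) : Prop where
  one_mem : 1 ∈ Q
  exists_algebraMap_sub_mem (a : A) : ∃ N : ℝ, algebraMap ℝ A N - a ∈ Q

namespace IsArchimedean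

theorem mono {P : SumSqModule A} (hQ : Q.IsArchimedean) (hQP : Q ≤ P) : P.IsArchimedean where
  one_mem := hQP hQ.one_mem
  exists_algebraMap_sub_mem a := (hQ.exists_algebraMap_sub_mem a).imp fun _ h => hQP h

theorem exists_algebraMap_sub_mem_gt (hQ : Q.IsArchimedean) (a : A) (r : ℝ) :
    ∃ N > r, algebraMap ℝ A N - a ∈ Q := by
  obtain ⟨N, hN⟩ := hQ.exists_algebraMap_sub_mem a
  exact ⟨max N (r + 1), by simp, algebraMap_sub_mem_of_le hQ.one_mem (le_max_left _ _) hN⟩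

theorem algebraMap_add_mul_mem (hQ : Q.IsArchimedean)
    (ha : ∀ ε : ℝ, 0 < ε → algebraMap ℝ A ε + a ∈ Q ∧ algebraMap ℝ A ε - a ∈ Q)
    (c : A) {ε : ℝ} (hε : 0 < ε) : algebraMap ℝ A ε + c * a ∈ Q := by
  obtain ⟨N, hN, hNQ⟩ :=
    hQ.exists_algebraMap_sub_mem_gt ((c + 1) * (c + 1) + (c - 1) * (c - 1)) 0
  obtain ⟨δ, hδ, hδN⟩ : ∃ δ : ℝ, 0 < δ ∧ δ * N = 4 * ε :=
    ⟨4 * ε / N, by positivity, by field_simp⟩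
  refine mem_of_pos_smul_mem (four_pos : (0 : ℝ) < 4) ?_
  convert Q.add_mem (Q.add_mem (mul_self_mul_mem (c + 1) (ha δ hδ).1)
    (mul_self_mul_mem (c - 1) (ha δ hδ).2)) (nonneg_smul_mem hδ.le hNQ) using 1
  have hδN' : algebraMap ℝ A δ * algebraMap ℝ A N = 4 * algebraMap ℝ A ε := by
    rw [← map_mul, hδN, map_mul, map_ofNat]
  simp only [Algebra.smul_def, map_ofNat]
  linear_combination -hδN'

/-- The ideal of elements which are smaller in absolute value, modulo `Q`, than every positive
constant. -/
def infinitesimals (hQ : Q.IsArchimedean) : Ideal A where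
  carrier := {a | ∀ ε : ℝ, 0 < ε → algebraMap ℝ A ε + a ∈ Q ∧ algebraMap ℝ A ε - a ∈ Q}
  zero_mem' ε hε := by simpa using algebraMap_mem hQ.one_mem hε.le
  add_mem' {a b} ha hb ε hε := by
    obtain ⟨ha₁, ha₂⟩ := ha (ε / 2) (half_pos hε)
    obtain ⟨hb₁, hb₂⟩ := hb (ε / 2) (half_pos hε)
    constructor
    · convert Q.add_mem ha₁ hb₁ using 1
      algebra
    · convert Q.add_mem ha₂ hb₂ using 1
      algebra
  smul_mem' c a ha ε hε :=
    ⟨hQ.algebraMap_add_mul_mem ha c hε, by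
      simpa only [smul_eq_mul, neg_mul, ← sub_eq_add_neg] using
        hQ.algebraMap_add_mul_mem ha (-c) hε⟩

theorem infinitesimals_ne_top (hQ : Q.IsArchimedean) (htop : Q ≠ ⊤) :
    hQ.infinitesimals ≠ ⊤ := by
  rw [Ideal.ne_top_iff_one]
  intro h
  have half_sub_one_mem := (h (1 / 2) one_half_pos).2
  rw [← map_one (algebraMap ℝ A), ← map_sub] at half_sub_one_mem
  linarith [nonneg_of_algebraMap_mem hQ.one_mem htop half_sub_one_mem]

theorem exists_sub_algebraMap_mem_infinitesimals (hQ : Q.IsArchimedean) (hmax : IsCoatom Q)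
    (a : A) : ∃ t : ℝ, a - algebraMap ℝ A t ∈ hQ.infinitesimals := by
  let D : Set ℝ := {r | a - algebraMap ℝ A r ∈ Q}
  have D_nonempty : D.Nonempty := by
    obtain ⟨N, hN⟩ := hQ.exists_algebraMap_sub_mem (-a)
    refine ⟨-N, ?_⟩
    change a - algebraMap ℝ A (-N) ∈ Q
    convert hN using 1
    algebra
  have D_bddAbove : BddAbove D := by
    obtain ⟨N, hN⟩ := hQ.exists_algebraMap_sub_mem a
    refine ⟨N, fun r hr => sub_nonneg.1 (nonneg_of_algebraMap_mem hQ.one_mem hmax.1 ?_)⟩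
    convert Q.add_mem hN (show a - algebraMap ℝ A r ∈ Q from hr) using 1
    algebra
  refine ⟨sSup D, fun ε hε => ⟨?_, ?_⟩⟩
  · obtain ⟨r, hr, hlt⟩ := exists_lt_of_lt_csSup D_nonempty (sub_lt_self (sSup D) hε)
    have hr' : algebraMap ℝ A (-r) + a ∈ Q := by
      rw [map_neg, neg_add_eq_sub]
      exact hr
    convert algebraMap_add_mem_of_le hQ.one_mem (neg_le_neg hlt.le) hr' using 1
    algebra
  · have sSup_add_notMem : sSup D + ε ∉ D := fun h => by linarith [le_csSup D_bddAbove h]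
    convert (mem_or_neg_mem_of_isCoatom hmax hQ.one_mem _).resolve_left sSup_add_notMem using 1
    algebra

theorem exists_algHom_of_isCoatom (hQ : Q.IsArchimedean) (hmax : IsCoatom Q) :
    ∃ α : A →ₐ[ℝ] ℝ, ∀ a ∈ Q, 0 ≤ α a := by
  let I := hQ.infinitesimals
  have : Nontrivial (A ⧸ I) := Ideal.Quotient.nontrivial_iff.2 (hQ.infinitesimals_ne_top hmax.1)
  have bijective : Function.Bijective (Algebra.ofId ℝ (A ⧸ I)) := by
    refine ⟨(algebraMap ℝ (A ⧸ I)).injective, fun x => ?_⟩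
    obtain ⟨a, rfl⟩ := Ideal.Quotient.mk_surjective x
    obtain ⟨t, ht⟩ := hQ.exists_sub_algebraMap_mem_infinitesimals hmax a
    exact ⟨t, (Ideal.Quotient.eq.2 ht).symm⟩
  let e := AlgEquiv.ofBijective (Algebra.ofId ℝ (A ⧸ I)) bijective
  let α : A →ₐ[ℝ] ℝ := e.symm.toAlgHom.comp (Ideal.Quotient.mkₐ ℝ I)
  have sub_mem (a : A) : a - algebraMap ℝ A (α a) ∈ I :=
    Ideal.Quotient.eq.1 (e.apply_symm_apply (Ideal.Quotient.mk I a)).symm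
  refine ⟨α, fun a ha => le_of_forall_pos_le_add fun ε hε => ?_⟩
  refine nonneg_of_algebraMap_mem hQ.one_mem hmax.1 ?_
  convert Q.add_mem (sub_mem a ε hε).2 ha using 1
  algebra

theorem exists_algHom (hQ : Q.IsArchimedean) (htop : Q ≠ ⊤) :
    ∃ α : A →ₐ[ℝ] ℝ, ∀ a ∈ Q, 0 ≤ α a := by
  obtain ⟨P, hP, hQP⟩ := (eq_top_or_exists_le_coatom Q).resolve_left htop
  exact ((hQ.mono hQP).exists_algHom_of_isCoatom hP).imp fun α hα a ha => hα a (hQP ha)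

section Positivstellensatz

variable {f s : A}

theorem exists_isSumSq_mul_sub_one_mem (hQ : Q.IsArchimedean)
    (hf : ∀ α : A →ₐ[ℝ] ℝ, (∀ a ∈ Q, 0 ≤ α a) → 0 < α f) :
    ∃ s, IsSumSq s ∧ s * f - 1 ∈ Q := by
  have sup_eq_top : Q ⊔ Submodule.span _ {-f} = ⊤ := by
    by_contra htop
    obtain ⟨α, hα⟩ := (hQ.mono le_sup_left).exists_algHom htop
    have neg_f_nonneg : 0 ≤ α (-f) :=
      hα _ (le_sup_right (a := Q) (Submodule.mem_span_singleton_self _))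
    have f_pos : 0 < α f := hf α fun a ha => hα a (le_sup_left (a := Q) ha)
    rw [map_neg] at neg_f_nonneg
    linarith
  obtain ⟨q, hq, s, hs, h⟩ :=
    mem_sup_span_singleton.1 (sup_eq_top ▸ Submodule.mem_top : (-1 : A) ∈ Q ⊔ _)
  refine ⟨s, hs, ?_⟩
  convert hq using 1
  linear_combination -h

theorem exists_pos_forall_add_sub_mem (hQ : Q.IsArchimedean) (hs : IsSumSq s)
    (hsf : s * f - 1 ∈ Q) :
    ∃ δ > 0, ∀ r : ℝ, 0 ≤ r → f + algebraMap ℝ A r ∈ Q → f + algebraMap ℝ A (r - δ) ∈ Q := by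
  obtain ⟨M, hM, hMs⟩ := hQ.exists_algebraMap_sub_mem_gt s 0
  obtain ⟨N, hN, hNs⟩ := hQ.exists_algebraMap_sub_mem_gt (s * s * f) 0
  let k : ℝ := M + N + 1
  have two_k_sub_s_mem : algebraMap ℝ A (2 * k) - s ∈ Q :=
    algebraMap_sub_mem_of_le hQ.one_mem (by grind) hMs
  have two_k_sub_one_sub_mem : algebraMap ℝ A (2 * k - 1) - s * s * f ∈ Q :=
    algebraMap_sub_mem_of_le hQ.one_mem (by grind) hNs
  have hk : 0 < k := by positivity
  refine ⟨1 / k ^ 2, by positivity, fun r hr hfr => ?_⟩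
  refine mem_of_pos_smul_mem (pow_pos hk 2) ?_
  convert Q.add_mem (Q.add_mem (Q.add_mem
    (mul_self_mul_mem (algebraMap ℝ A k - s) hfr)
    (nonneg_smul_mem (mul_nonneg zero_le_two hk.le) hsf))
    (nonneg_smul_mem hr (isSumSq_mul_mem hs two_k_sub_s_mem)))
    two_k_sub_one_sub_mem using 1
  rw [smul_add, Algebra.smul_def (k ^ 2) (algebraMap _ _ _), ← map_mul,
    show k ^ 2 * (r - 1 / k ^ 2) = k ^ 2 * r - 1 by field_simp]
  algebra

theorem mem_of_isSumSq_mul_sub_one_mem (hQ : Q.IsArchimedean) (hs : IsSumSq s)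
    (hsf : s * f - 1 ∈ Q) : f ∈ Q := by
  by_contra hf
  obtain ⟨δ, hδ, step⟩ := hQ.exists_pos_forall_add_sub_mem hs hsf
  let D : Set ℝ := {r | f + algebraMap ℝ A r ∈ Q}
  have nonneg_of_mem (r : ℝ) (hr : r ∈ D) : 0 ≤ r := by
    by_contra! hneg
    refine hf ?_
    convert Q.add_mem hr (algebraMap_mem hQ.one_mem (neg_nonneg.2 hneg.le)) using 1
    algebra
  have D_nonempty : D.Nonempty := by
    obtain ⟨N, hN⟩ := hQ.exists_algebraMap_sub_mem (-f)
    refine ⟨N, ?_⟩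
    change f + algebraMap ℝ A N ∈ Q
    convert hN using 1
    algebra
  obtain ⟨r, hr, hlt⟩ := exists_lt_of_csInf_lt D_nonempty (lt_add_of_pos_right (sInf D) hδ)
  have sInf_le : sInf D ≤ r - δ := csInf_le ⟨0, nonneg_of_mem⟩ (step r (nonneg_of_mem r hr) hr)
  linarith

theorem mem_of_forall_algHom_pos (hQ : Q.IsArchimedean)
    (hf : ∀ α : A →ₐ[ℝ] ℝ, (∀ a ∈ Q, 0 ≤ α a) → 0 < α f) : f ∈ Q := by
  obtain ⟨s, hs, hsf⟩ := hQ.exists_isSumSq_mul_sub_one_mem hf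
  exact hQ.mem_of_isSumSq_mul_sub_one_mem hs hsf

end Positivstellensatz

end IsArchimedean

section Boundedness

theorem algebraMap_sq_sub_mul_self_mem {N : ℝ} (hN : 0 < N) (hadd : algebraMap ℝ A N + a ∈ Q)
    (hsub : algebraMap ℝ A N - a ∈ Q) : algebraMap ℝ A (N ^ 2) - a * a ∈ Q := by
  refine mem_of_pos_smul_mem (mul_pos two_pos hN) ?_
  convert Q.add_mem (mul_self_mul_mem (algebraMap ℝ A N + a) hsub)
    (mul_self_mul_mem (algebraMap ℝ A N - a) hadd) using 1
  algebra

/-- The elements which are bounded in absolute value by a constant, modulo `Q`. -/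
def boundedSubalgebra (h1 : 1 ∈ Q) : Subalgebra ℝ A where
  carrier := {a | ∃ N : ℝ, 0 < N ∧ algebraMap ℝ A N + a ∈ Q ∧ algebraMap ℝ A N - a ∈ Q}
  algebraMap_mem' r := by
    refine ⟨|r| + 1, by positivity, ?_, ?_⟩
    · rw [← map_add]
      exact algebraMap_mem h1 (by linarith [neg_abs_le r])
    · rw [← map_sub]
      exact algebraMap_mem h1 (by linarith [le_abs_self r])
  add_mem' := by
    rintro a b ⟨M, hM, ha₁, ha₂⟩ ⟨N, hN, hb₁, hb₂⟩
    refine ⟨M + N, add_pos hM hN, ?_, ?_⟩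
    · convert Q.add_mem ha₁ hb₁ using 1
      algebra
    · convert Q.add_mem ha₂ hb₂ using 1
      algebra
  mul_mem' := by
    rintro a b ⟨M, hM, ha₁, ha₂⟩ ⟨N, hN, hb₁, hb₂⟩
    have mul_le (b : A) (hb₁ : algebraMap ℝ A N + b ∈ Q) (hb₂ : algebraMap ℝ A N - b ∈ Q) :
        algebraMap ℝ A ((M + N) ^ 2) - a * b ∈ Q := by
      have sq_sub_mem : algebraMap ℝ A ((M + N) ^ 2) - (a + b) * (a + b) ∈ Q := by
        refine algebraMap_sq_sub_mul_self_mem (add_pos hM hN) ?_ ?_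
        · convert Q.add_mem ha₁ hb₁ using 1
          algebra
        · convert Q.add_mem ha₂ hb₂ using 1
          algebra
      refine mem_of_pos_smul_mem (two_pos : (0 : ℝ) < 2) ?_
      convert Q.add_mem (Q.add_mem sq_sub_mem (algebraMap_mem h1 (sq_nonneg (M + N))))
        (Q.add_mem (mul_self_mem h1 a) (mul_self_mem h1 b)) using 1
      algebra
    refine ⟨(M + N) ^ 2, by positivity, ?_, mul_le b hb₁ hb₂⟩
    convert mul_le (-b) (by rwa [← sub_eq_add_neg]) (by rwa [sub_neg_eq_add]) using 1
    algebra

theorem mem_boundedSubalgebra_of_sub_mul_self_mem (h1 : 1 ∈ Q) {N : ℝ}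
    (ha : algebraMap ℝ A N - a * a ∈ Q) : a ∈ boundedSubalgebra h1 := by
  have add_mem (b : A) (hb : algebraMap ℝ A N - b * b ∈ Q) : algebraMap ℝ A (|N| + 1) + b ∈ Q := by
    have hN : N + 1 / 4 ≤ |N| + 1 := by linarith [le_abs_self N]
    refine algebraMap_add_mem_of_le h1 hN ?_
    convert Q.add_mem hb (mul_self_mem h1 (b + algebraMap ℝ A (1 / 2))) using 1
    algebra
  refine ⟨|N| + 1, by positivity, add_mem a ha, ?_⟩
  simpa only [sub_eq_add_neg] using add_mem (-a) (by rwa [neg_mul_neg])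

theorem isArchimedean_of_sub_sum_X_sq_mem {τ : Type*} [Fintype τ]
    {Q : SumSqModule (MvPolynomial τ ℝ)} {N : ℝ} (h1 : 1 ∈ Q) (hN : C N - ∑ i, X i ^ 2 ∈ Q) :
    Q.IsArchimedean where
  one_mem := h1
  exists_algebraMap_sub_mem a := by
    have X_mem (i : τ) : X i ∈ boundedSubalgebra h1 := by
      classical
      refine mem_boundedSubalgebra_of_sub_mul_self_mem h1 (N := N) ?_
      have sum_sq_mem : ∑ j ∈ Finset.univ.erase i, (X j ^ 2 : MvPolynomial τ ℝ) ∈ Q :=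
        Q.sum_mem fun j _ => sq (X j : MvPolynomial τ ℝ) ▸ mul_self_mem h1 (X j)
      convert Q.add_mem hN sum_sq_mem using 1
      rw [← Finset.add_sum_erase _ _ (Finset.mem_univ i), algebraMap_eq]
      ring
    have bounded_eq_top : boundedSubalgebra h1 = ⊤ :=
      top_le_iff.1 <| adjoin_range_X (R := ℝ) (σ := τ) ▸
        Algebra.adjoin_le (range_subset_iff.2 X_mem)
    obtain ⟨N, -, -, hN⟩ : a ∈ boundedSubalgebra h1 := bounded_eq_top ▸ Algebra.mem_top
    exact ⟨N, hN⟩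

theorem IsArchimedean.mem_of_forall_eval_pos {τ : Type*} {S : Set (MvPolynomial τ ℝ)}
    (hS : (generated S).IsArchimedean) {g : MvPolynomial τ ℝ}
    (hg : ∀ w : τ → ℝ, (∀ h ∈ S, 0 ≤ eval w h) → 0 < eval w g) : g ∈ generated S := by
  refine hS.mem_of_forall_algHom_pos fun α hα => ?_
  have eval_eq (q : MvPolynomial τ ℝ) : α q = eval (α ∘ X) q := by
    rw [← coe_aeval_eq_eval]
    exact DFunLike.congr_fun (aeval_unique α) q
  rw [eval_eq]
  refine hg _ fun h hh => ?_
  rw [← eval_eq]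
  exact hα h (Submodule.subset_span (mem_insert_of_mem _ hh))

end Boundedness

end SumSqModule

section ValueFunction

variable {W Z : Type*} {π : W → Z} {K : Set W} {F : W → ℝ}

/-- The infimum of `F` over the points of `K` lying above `z`, that is, the optimal value of the
problem parametrised by `z`. It is `0` when there are no such points. -/
def valueFunction (π : W → Z) (K : Set W) (F : W → ℝ) (z : Z) : ℝ :=
  sInf (F '' (K ∩ π ⁻¹' {z}))

theorem valueFunction_le (hF : BddBelow (F '' K)) {w : W} (hw : w ∈ K) :
    valueFunction π K F (π w) ≤ F w :=
  csInf_le (hF.mono (image_mono inter_subset_left)) ⟨w, ⟨hw, rfl⟩, rfl⟩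

theorem le_valueFunction {z : Z} (hz : z ∈ π '' K) {c : ℝ} (h : ∀ w ∈ K, π w = z → c ≤ F w) :
    c ≤ valueFunction π K F z := by
  obtain ⟨w, hw, rfl⟩ := hz
  refine le_csInf ⟨F w, w, ⟨hw, rfl⟩, rfl⟩ ?_
  rintro _ ⟨v, ⟨hv, hvw⟩, rfl⟩
  exact h v hv hvw

theorem valueFunction_of_notMem {z : Z} (hz : z ∉ π '' K) : valueFunction π K F z = 0 := by
  have fiber_eq_empty : K ∩ π ⁻¹' {z} = ∅ :=
    eq_empty_of_forall_notMem fun w hw => hz ⟨w, hw⟩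
  rw [valueFunction, fiber_eq_empty, image_empty, Real.sInf_empty]

theorem exists_abs_valueFunction_le [TopologicalSpace W] (hK : IsCompact K) (hF : Continuous F) :
    ∃ B, ∀ z ∈ π '' K, |valueFunction π K F z| ≤ B := by
  obtain ⟨B, hB⟩ := hK.exists_bound_of_continuousOn hF.continuousOn
  refine ⟨B, ?_⟩
  rintro _ ⟨w, hw, rfl⟩
  refine abs_le.2 ⟨le_valueFunction ⟨w, hw, rfl⟩ fun v hv _ => (abs_le.1 (hB v hv)).1, ?_⟩
  exact (valueFunction_le (hK.bddBelow_image hF.continuousOn) hw).trans (abs_le.1 (hB w hw)).2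

variable [MetricSpace Z]

/-- The `k`-Lipschitz regularisation of `valueFunction π K F`: the constraint `π w = z` is replaced
by a penalty proportional to the distance from `z` to `π w`. -/
def penalizedValue (π : W → Z) (K : Set W) (F : W → ℝ) (k : ℝ) (z : Z) : ℝ :=
  sInf ((fun w => F w + k * dist z (π w)) '' K)

theorem le_penalizedValue (hne : K.Nonempty) {c k : ℝ} {z : Z}
    (h : ∀ w ∈ K, c ≤ F w + k * dist z (π w)) : c ≤ penalizedValue π K F k z :=
  le_csInf (hne.image _) (forall_mem_image.2 h)

theorem penalizedValue_le_valueFunction (hF : BddBelow (F '' K)) {k : ℝ} (hk : 0 ≤ k) {z : Z}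
    (hz : z ∈ π '' K) : penalizedValue π K F k z ≤ valueFunction π K F z := by
  refine le_valueFunction hz fun w hw hwz => csInf_le ?_ ⟨w, hw, by simp [hwz]⟩
  obtain ⟨b, hb⟩ := hF
  refine ⟨b, forall_mem_image.2 fun v hv => ?_⟩
  exact le_add_of_le_of_nonneg (hb ⟨v, hv, rfl⟩) (by positivity)

variable [TopologicalSpace W]

theorem continuous_penalizedValue (hK : IsCompact K) (hπ : Continuous π) (hF : Continuous F)
    (k : ℝ) : Continuous (penalizedValue π K F k) :=
  hK.continuous_sInf (f := fun z w => F w + k * dist z (π w)) (by fun_prop)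

theorem exists_pos_le_dist_of_lt_valueFunction (hK : IsCompact K) (hπ : Continuous π)
    (hF : Continuous F) {z : Z} {c : ℝ} (hc : c < valueFunction π K F z) :
    ∃ δ > 0, ∀ w ∈ K, F w ≤ c → δ ≤ dist z (π w) := by
  let L : Set Z := π '' (K ∩ F ⁻¹' Iic c)
  have isClosed_L : IsClosed L :=
    ((hK.inter_right (isClosed_Iic.preimage hF)).image hπ).isClosed
  have z_notMem : z ∉ L := by
    rintro ⟨w, ⟨hw, hwc⟩, rfl⟩
    exact hc.not_ge ((valueFunction_le (hK.bddBelow_image hF.continuousOn) hw).trans hwc)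
  obtain ⟨δ, hδ, disjoint_ball⟩ := Metric.isOpen_iff.1 isClosed_L.isOpen_compl z z_notMem
  refine ⟨δ, hδ, fun w hw hwc => ?_⟩
  by_contra! hlt
  exact disjoint_ball (Metric.mem_ball'.2 hlt) ⟨w, ⟨hw, hwc⟩, rfl⟩

theorem tendsto_penalizedValue (hK : IsCompact K) (hπ : Continuous π) (hF : Continuous F) {z : Z}
    (hz : z ∈ π '' K) :
    Tendsto (penalizedValue π K F · z) atTop (𝓝 (valueFunction π K F z)) := by
  have bddBelow := hK.bddBelow_image hF.continuousOn
  refine tendsto_order.2 ⟨fun c hc => ?_, fun c hc => ?_⟩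
  · obtain ⟨c', hcc', hc'⟩ := exists_between hc
    obtain ⟨δ, hδ, far⟩ := exists_pos_le_dist_of_lt_valueFunction hK hπ hF hc'
    obtain ⟨b, hb⟩ := bddBelow
    filter_upwards [eventually_ge_atTop 0, eventually_ge_atTop ((c' - b) / δ)] with k hk hkδ
    refine hcc'.trans_le (le_penalizedValue (image_nonempty.1 ⟨z, hz⟩) fun w hw => ?_)
    rcases le_total (F w) c' with hwc | hwc
    · have penalty_large : c' - b ≤ k * dist z (π w) :=
        ((div_le_iff₀ hδ).1 hkδ).trans (mul_le_mul_of_nonneg_left (far w hw hwc) hk)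
      linarith [hb ⟨w, hw, rfl⟩]
    · exact le_add_of_le_of_nonneg hwc (by positivity)
  · filter_upwards [eventually_ge_atTop 0] with k hk
    exact (penalizedValue_le_valueFunction bddBelow hk hz).trans_lt hc

theorem measurable_valueFunction [MeasurableSpace Z] [BorelSpace Z] (hK : IsCompact K)
    (hπ : Continuous π) (hF : Continuous F) : Measurable (valueFunction π K F) := by
  have measurable_approx (k : ℕ) : Measurable ((π '' K).indicator (penalizedValue π K F k)) :=
    (continuous_penalizedValue hK hπ hF k).measurable.indicator
      (hK.image hπ).isClosed.measurableSet
  refine measurable_of_tendsto_metrizable measurable_approx (tendsto_pi_nhds.2 fun z => ?_)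
  by_cases hz : z ∈ π '' K
  · simpa only [indicator_of_mem hz, Function.comp_def] using
      (tendsto_penalizedValue hK hπ hF hz).comp tendsto_natCast_atTop_atTop
  · simpa only [indicator_of_notMem hz, valueFunction_of_notMem hz] using tendsto_const_nhds

theorem integrableOn_valueFunction [MeasurableSpace Z] [BorelSpace Z] (hK : IsCompact K)
    (hπ : Continuous π) (hF : Continuous F) (φ : Measure Z) [IsFiniteMeasureOnCompacts φ] :
    IntegrableOn (valueFunction π K F) (π '' K) φ := by
  obtain ⟨B, hB⟩ := exists_abs_valueFunction_le (π := π) hK hF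
  exact Measure.integrableOn_of_bounded (hK.image hπ).measure_lt_top.ne
    (measurable_valueFunction hK hπ hF).aestronglyMeasurable
    ((ae_restrict_iff' (hK.image hπ).isClosed.measurableSet).2 (.of_forall hB))

end ValueFunction

section PolynomialApproximation

variable {σ : Type*}

theorem exists_forall_abs_eval_sub_lt {Y : Set (σ → ℝ)} (hY : IsCompact Y) {g : (σ → ℝ) → ℝ}
    (hg : Continuous g) {ε : ℝ} (hε : 0 < ε) :
    ∃ q : MvPolynomial σ ℝ, ∀ y ∈ Y, |eval y q - g y| < ε := by
  let Φ : MvPolynomial σ ℝ →ₐ[ℝ] C(σ → ℝ, ℝ) := aeval fun i => ⟨fun y => y i, continuous_apply i⟩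
  have Φ_apply (q : MvPolynomial σ ℝ) (y : σ → ℝ) : Φ q y = eval y q := by
    rw [← coe_aeval_eq_eval]
    exact DFunLike.congr_fun (comp_aeval _ (ContinuousMap.evalAlgHom ℝ ℝ y)) q
  have separates : Φ.range.SeparatesPoints := by
    intro x y hxy
    obtain ⟨i, hi⟩ := Function.ne_iff.1 hxy
    exact ⟨_, ⟨Φ (X i), ⟨X i, rfl⟩, rfl⟩, by simpa only [Φ_apply, eval_X] using hi⟩
  obtain ⟨_, ⟨q, rfl⟩, hq⟩ :=
    ContinuousMap.exists_mem_subalgebra_near_continuous_of_isCompact_of_separatesPoints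
      separates ⟨g, hg⟩ hY hε
  exact ⟨q, fun y hy => Φ_apply q y ▸ hq y hy⟩

variable {W : Type*} [TopologicalSpace W] [Finite σ] {π : W → σ → ℝ} {K : Set W} {F : W → ℝ}

theorem exists_mvPolynomial_tendsto_valueFunction (hK : IsCompact K) (hπ : Continuous π)
    (hF : Continuous F) :
    ∃ q : ℕ → MvPolynomial σ ℝ, (∀ k, ∀ y ∈ π '' K, eval y (q k) < valueFunction π K F y) ∧
      (∀ y ∈ π '' K, Tendsto (fun k => eval y (q k)) atTop (𝓝 (valueFunction π K F y))) ∧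
      ∃ B, ∀ k, ∀ y ∈ π '' K, |eval y (q k)| ≤ B := by
  have := Fintype.ofFinite σ
  have hF_bdd := hK.bddBelow_image hF.continuousOn
  have approx (k : ℕ) : ∃ q : MvPolynomial σ ℝ, ∀ y ∈ π '' K,
      |eval y q - (penalizedValue π K F k y - 1 / ((k : ℝ) + 1))| < 1 / ((k : ℝ) + 1) :=
    exists_forall_abs_eval_sub_lt (hK.image hπ)
      ((continuous_penalizedValue hK hπ hF k).sub continuous_const) Nat.one_div_pos_of_nat
  choose q hq using approx
  have lt_penalized (k : ℕ) (y) (hy : y ∈ π '' K) : eval y (q k) < penalizedValue π K F k y := by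
    linarith [(abs_lt.1 (hq k y hy)).2]
  have penalized_lt (k : ℕ) (y) (hy : y ∈ π '' K) :
      penalizedValue π K F k y - 2 * (1 / ((k : ℝ) + 1)) < eval y (q k) := by
    linarith [(abs_lt.1 (hq k y hy)).1]
  have lt_value (k : ℕ) (y) (hy : y ∈ π '' K) : eval y (q k) < valueFunction π K F y :=
    (lt_penalized k y hy).trans_le (penalizedValue_le_valueFunction hF_bdd k.cast_nonneg hy)
  refine ⟨q, lt_value, fun y hy => ?_, ?_⟩
  · have penalized_tendsto :=
      (tendsto_penalizedValue hK hπ hF hy).comp tendsto_natCast_atTop_atTop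
    refine tendsto_of_tendsto_of_tendsto_of_le_of_le ?_ penalized_tendsto
      (fun k => (penalized_lt k y hy).le) fun k => (lt_penalized k y hy).le
    simpa only [mul_zero, sub_zero, Function.comp_def] using
      penalized_tendsto.sub (tendsto_one_div_add_atTop_nhds_zero_nat.const_mul 2)
  · obtain ⟨b, hb⟩ := hF_bdd
    obtain ⟨B, hB⟩ := exists_abs_valueFunction_le (π := π) hK hF
    refine ⟨max (-(b - 2)) B, fun k y hy => abs_le.2 ⟨?_, ?_⟩⟩
    · have le_penalized : b ≤ penalizedValue π K F k y :=
        le_penalizedValue (image_nonempty.1 ⟨y, hy⟩) fun w hw =>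
          le_add_of_le_of_nonneg (hb ⟨w, hw, rfl⟩) (by positivity)
      have inv_le_one : 1 / ((k : ℝ) + 1) ≤ 1 := div_le_self zero_le_one (by simp)
      linarith [penalized_lt k y hy, le_max_left (-(b - 2)) B]
    · exact (lt_value k y hy).le.trans ((le_of_abs_le (hB y hy)).trans (le_max_right _ _))

theorem exists_mvPolynomial_lt_valueFunction_lt_integral (hK : IsCompact K) (hπ : Continuous π)
    (hF : Continuous F) (φ : Measure (σ → ℝ)) [IsFiniteMeasureOnCompacts φ] {c : ℝ}
    (hc : c < ∫ y in π '' K, valueFunction π K F y ∂φ) :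
    ∃ q : MvPolynomial σ ℝ, (∀ y ∈ π '' K, eval y q < valueFunction π K F y) ∧
      c < ∫ y in π '' K, eval y q ∂φ := by
  have := Fintype.ofFinite σ
  obtain ⟨q, q_lt, q_tendsto, B, hB⟩ := exists_mvPolynomial_tendsto_valueFunction hK hπ hF
  have measurableSet_image : MeasurableSet (π '' K) := (hK.image hπ).isClosed.measurableSet
  have integral_tendsto : Tendsto (fun k => ∫ y in π '' K, eval y (q k) ∂φ) atTop
      (𝓝 (∫ y in π '' K, valueFunction π K F y ∂φ)) :=
    tendsto_integral_of_dominated_convergence (fun _ => B)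
      (fun k => (continuous_eval (q k)).aestronglyMeasurable)
      (integrableOn_const (hK.image hπ).measure_lt_top.ne)
      (fun k => (ae_restrict_iff' measurableSet_image).2 (.of_forall (hB k)))
      ((ae_restrict_iff' measurableSet_image).2 (.of_forall q_tendsto))
  obtain ⟨k, hk⟩ := (integral_tendsto.eventually_const_lt hc).exists
  exact ⟨q k, q_lt k, hk⟩

end PolynomialApproximation

section RunningMaximum

theorem eq_partialSups_of_forall_sup {α : Type*} [SemilatticeSup α] {q u : ℕ → α} {i₀ : ℕ}
    (h₀ : u i₀ = q i₀) (hsucc : ∀ i, i₀ ≤ i → u (i + 1) = u i ⊔ q (i + 1)) (k : ℕ) :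
    u (k + i₀) = partialSups (fun j => q (j + i₀)) k := by
  induction k with
  | zero => simpa only [zero_add, partialSups_zero] using h₀
  | succ k ih =>
    rw [partialSups_add_one, ← ih, Nat.add_right_comm, hsucc _ (Nat.le_add_left _ _)]

theorem partialSups_induction {α : Type*} [SemilatticeSup α] {p : α → Prop}
    (hsup : ∀ a, p a → ∀ b, p b → p (a ⊔ b)) {q : ℕ → α} (hq : ∀ i, p (q i)) (i : ℕ) :
    p (partialSups q i) :=
  partialSups_apply q i ▸ Finset.sup'_induction _ _ hsup fun j _ => hq j

variable {α : Type*} [MeasurableSpace α] {μ : Measure α} {q : ℕ → α → ℝ} {g : α → ℝ}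

theorem ae_tendsto_partialSups (hq : ∀ i, Integrable (q i) μ) (hg : Integrable g μ)
    (hle : ∀ i, q i ≤ᵐ[μ] g)
    (hlim : Tendsto (fun i => ∫ x, q i x ∂μ) atTop (𝓝 (∫ x, g x ∂μ))) :
    ∀ᵐ x ∂μ, Tendsto (fun i => partialSups q i x) atTop (𝓝 (g x)) := by
  have integrable (i : ℕ) : Integrable (partialSups q i) μ :=
    partialSups_induction (p := (Integrable · μ)) (fun _ hu _ hv => hu.sup hv) hq i
  have ae_le : ∀ᵐ x ∂μ, ∀ i, partialSups q i x ≤ g x := by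
    filter_upwards [ae_all_iff.2 hle] with x hx i
    rw [Pi.partialSups_apply]
    exact partialSups_le _ _ _ fun j _ => hx j
  refine tendsto_of_integral_tendsto_of_monotone integrable hg ?_
    (.of_forall fun x => fun i j hij => (partialSups q).monotone hij x) ae_le
  refine tendsto_of_tendsto_of_tendsto_of_le_of_le hlim tendsto_const_nhds (fun i => ?_) fun i => ?_
  · exact integral_mono (hq i) (integrable i) (le_partialSups q i)
  · exact integral_mono_ae (integrable i) hg (ae_le.mono fun x hx => hx i)

theorem exists_measure_lt_tendstoUniformlyOn_partialSups {s : Set α} (hs : MeasurableSet s)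
    (hμs : μ s ≠ ⊤) (hqm : ∀ i, StronglyMeasurable (q i)) (hgm : StronglyMeasurable g)
    (hq : ∀ i, IntegrableOn (q i) s μ) (hg : IntegrableOn g s μ)
    (hle : ∀ i, ∀ x ∈ s, q i x ≤ g x)
    (hlim : Tendsto (fun i => ∫ x in s, q i x ∂μ) atTop (𝓝 (∫ x in s, g x ∂μ)))
    {ε : ENNReal} (hε : 0 < ε) :
    ∃ t ⊆ s, MeasurableSet t ∧ μ t < ε ∧ TendstoUniformlyOn (partialSups q) g atTop (s \ t) := by
  have stronglyMeasurable (i : ℕ) : StronglyMeasurable (partialSups q i) :=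
    partialSups_induction (fun _ hu _ hv => hu.sup hv) hqm i
  have ae_tendsto : ∀ᵐ x ∂μ, x ∈ s → Tendsto (fun i => partialSups q i x) atTop (𝓝 (g x)) :=
    (ae_restrict_iff' hs).1 <| ae_tendsto_partialSups hq hg
      (fun i => (ae_restrict_iff' hs).2 (.of_forall (hle i))) hlim
  obtain ⟨δ, hδ, hδε⟩ := ENNReal.lt_iff_exists_nnreal_btwn.1 hε
  obtain ⟨t, hts, htm, htδ, ht⟩ := tendstoUniformlyOn_of_ae_tendsto stronglyMeasurable hgm hs hμs
    ae_tendsto (ENNReal.coe_pos.1 hδ)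
  exact ⟨t, hts, htm, (htδ.trans_eq ENNReal.ofReal_coe_nnreal).trans_lt hδε, ht⟩

end RunningMaximum

section DualRelaxation

section BasicClosedSet

variable {τ ι : Type*}

/-- The basic closed semialgebraic set cut out by the inequalities `0 ≤ H j`. -/
def basicClosedSet (H : ι → MvPolynomial τ ℝ) : Set (τ → ℝ) :=
  {w | ∀ j, 0 ≤ eval w (H j)}

variable {H : ι → MvPolynomial τ ℝ}

theorem isClosed_basicClosedSet : IsClosed (basicClosedSet H) := by
  simp only [basicClosedSet, ofPred_forall]
  exact isClosed_iInter fun j => isClosed_le continuous_const (continuous_eval (H j))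

theorem eval_nonneg_of_mem_generated {w : τ → ℝ} (hw : w ∈ basicClosedSet H)
    {g : MvPolynomial τ ℝ} (hg : g ∈ SumSqModule.generated (range H)) : 0 ≤ eval w g :=
  SumSqModule.map_nonneg_of_mem_generated (eval w) (forall_mem_range.2 hw) hg

theorem isCompact_basicClosedSet (hH : (SumSqModule.generated (range H)).IsArchimedean) :
    IsCompact (basicClosedSet H) := by
  choose N hN using fun i : τ => hH.exists_algebraMap_sub_mem (X i ^ 2)
  refine (isCompact_univ_pi fun i => isCompact_Icc (a := -√(N i)) (b := √(N i))).of_isClosed_subset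
    isClosed_basicClosedSet fun w hw i _ => abs_le.1 (Real.abs_le_sqrt ?_)
  have bound := eval_nonneg_of_mem_generated hw (hN i)
  simpa only [algebraMap_eq, map_sub, eval_C, map_pow, eval_X, sub_nonneg] using bound

end BasicClosedSet

section Parametric

variable {σ τ ι : Type*}

/-- The parameters `y`, obtained from points `w` by `y = w ∘ ρ`, for which the constraints
`0 ≤ H j` are feasible. -/
abbrev feasibleParameters (ρ : σ → τ) (H : ι → MvPolynomial τ ℝ) : Set (σ → ℝ) :=
  (· ∘ ρ) '' basicClosedSet H

/-- The optimal value, as a function of the parameter `y`, of minimising `f` over the points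
`w` with `w ∘ ρ = y` subject to the constraints `0 ≤ H j`. -/
abbrev parametricValue (ρ : σ → τ) (H : ι → MvPolynomial τ ℝ) (f : MvPolynomial τ ℝ) :
    (σ → ℝ) → ℝ :=
  valueFunction (· ∘ ρ) (basicClosedSet H) (eval · f)

variable {ρ : σ → τ} {H : ι → MvPolynomial τ ℝ} {f : MvPolynomial τ ℝ} {q : MvPolynomial σ ℝ}

theorem eval_le_parametricValue (hq : f - rename ρ q ∈ SumSqModule.generated (range H))
    {y : σ → ℝ} (hy : y ∈ feasibleParameters ρ H) : eval y q ≤ parametricValue ρ H f y := by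
  refine le_valueFunction hy fun w hw hwy => ?_
  simpa only [map_sub, eval_rename, hwy, sub_nonneg] using eval_nonneg_of_mem_generated hw hq

theorem sub_rename_mem_generated (hH : (SumSqModule.generated (range H)).IsArchimedean)
    (hq : ∀ y ∈ feasibleParameters ρ H, eval y q < parametricValue ρ H f y) :
    f - rename ρ q ∈ SumSqModule.generated (range H) := by
  refine SumSqModule.IsArchimedean.mem_of_forall_eval_pos hH fun w hw => ?_
  rw [forall_mem_range] at hw
  rw [map_sub, eval_rename, sub_pos]
  exact (hq _ ⟨w, hw, rfl⟩).trans_le <|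
    valueFunction_le ((isCompact_basicClosedSet hH).bddBelow_image
      (continuous_eval f).continuousOn) hw

theorem isCompact_feasibleParameters (hH : (SumSqModule.generated (range H)).IsArchimedean) :
    IsCompact (feasibleParameters ρ H) :=
  (isCompact_basicClosedSet hH).image (Pi.continuous_precomp ρ)

variable [Finite σ] (φ : Measure (σ → ℝ)) [IsFiniteMeasureOnCompacts φ]

theorem integrableOn_eval (hH : (SumSqModule.generated (range H)).IsArchimedean)
    (q : MvPolynomial σ ℝ) : IntegrableOn (eval · q) (feasibleParameters ρ H) φ :=
  (continuous_eval q).continuousOn.integrableOn_compact (isCompact_feasibleParameters hH)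

theorem integrableOn_parametricValue (hH : (SumSqModule.generated (range H)).IsArchimedean) :
    IntegrableOn (parametricValue ρ H f) (feasibleParameters ρ H) φ := by
  have := Fintype.ofFinite σ
  exact integrableOn_valueFunction (isCompact_basicClosedSet hH) (Pi.continuous_precomp ρ)
    (continuous_eval f) φ

theorem integral_eval_le_integral_parametricValue
    (hH : (SumSqModule.generated (range H)).IsArchimedean)
    (hq : f - rename ρ q ∈ SumSqModule.generated (range H)) :
    ∫ y in feasibleParameters ρ H, eval y q ∂φ ≤
      ∫ y in feasibleParameters ρ H, parametricValue ρ H f y ∂φ :=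
  setIntegral_mono_on (integrableOn_eval φ hH q) (integrableOn_parametricValue φ hH)
    (isCompact_feasibleParameters hH).isClosed.measurableSet fun _ => eval_le_parametricValue hq

theorem tendsto_integral_parametricValue_sub
    (hH : (SumSqModule.generated (range H)).IsArchimedean) {qs : ℕ → MvPolynomial σ ℝ}
    (hlim : Tendsto (fun i => ∫ y in feasibleParameters ρ H, eval y (qs i) ∂φ) atTop
      (𝓝 (∫ y in feasibleParameters ρ H, parametricValue ρ H f y ∂φ))) :
    Tendsto (fun i => ∫ y in feasibleParameters ρ H, (parametricValue ρ H f y - eval y (qs i)) ∂φ)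
      atTop (𝓝 0) := by
  simpa only [integral_sub (integrableOn_parametricValue φ hH) (integrableOn_eval φ hH _),
    sub_self] using hlim.const_sub (∫ y in feasibleParameters ρ H, parametricValue ρ H f y ∂φ)

theorem exists_measure_lt_tendstoUniformlyOn_runningMax
    (hH : (SumSqModule.generated (range H)).IsArchimedean) {qs : ℕ → MvPolynomial σ ℝ} {i₀ : ℕ}
    (hqs : ∀ i, i₀ ≤ i → f - rename ρ (qs i) ∈ SumSqModule.generated (range H))
    (hlim : Tendsto (fun i => ∫ y in feasibleParameters ρ H, eval y (qs i) ∂φ) atTop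
      (𝓝 (∫ y in feasibleParameters ρ H, parametricValue ρ H f y ∂φ)))
    {u : ℕ → (σ → ℝ) → ℝ} (h₀ : u i₀ = fun y => eval y (qs i₀))
    (hsucc : ∀ i, i₀ ≤ i → u (i + 1) = fun y => max (u i y) (eval y (qs (i + 1))))
    {ε : ENNReal} (hε : 0 < ε) :
    ∃ A ⊆ feasibleParameters ρ H, MeasurableSet A ∧ φ A < ε ∧
      TendstoUniformlyOn u (parametricValue ρ H f) atTop (feasibleParameters ρ H \ A) := by
  have := Fintype.ofFinite σ
  have isCompact_params := isCompact_feasibleParameters (ρ := ρ) hH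
  have measurable_value : Measurable (parametricValue ρ H f) :=
    measurable_valueFunction (isCompact_basicClosedSet hH) (Pi.continuous_precomp ρ)
      (continuous_eval f)
  obtain ⟨A, hA, hAm, hAε, hunif⟩ := exists_measure_lt_tendstoUniformlyOn_partialSups
    (q := fun k y => eval y (qs (k + i₀)))
    isCompact_params.isClosed.measurableSet isCompact_params.measure_lt_top.ne
    (fun k => (continuous_eval _).stronglyMeasurable) measurable_value.stronglyMeasurable
    (fun k => integrableOn_eval φ hH _) (integrableOn_parametricValue φ hH)
    (fun k y => eval_le_parametricValue (hqs _ (Nat.le_add_left _ _)))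
    ((tendsto_add_atTop_iff_nat i₀).2 hlim) hε
  refine ⟨A, hA, hAm, hAε, fun v hv => ?_⟩
  rw [← map_add_atTop_eq_nat i₀, eventually_map]
  simpa only [eq_partialSups_of_forall_sup (q := fun i y => eval y (qs i)) h₀ hsucc]
    using hunif v hv

end Parametric

section Fibers

variable {α β ι : Type*} {H : ι → MvPolynomial (α ⊕ β) ℝ} {Y : Set (β → ℝ)}
  {Ky : (β → ℝ) → Set (α → ℝ)}

theorem feasibleParameters_eq
    (hfib : ∀ x y, Sum.elim x y ∈ basicClosedSet H ↔ y ∈ Y ∧ x ∈ Ky y)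
    (hne : ∀ y ∈ Y, (Ky y).Nonempty) : feasibleParameters Sum.inr H = Y := by
  ext y
  constructor
  · rintro ⟨w, hw, rfl⟩
    rw [← Sum.elim_comp_inl_inr w] at hw
    exact ((hfib _ _).1 hw).1
  · intro hy
    obtain ⟨x, hx⟩ := hne y hy
    exact ⟨Sum.elim x y, (hfib x y).2 ⟨hy, hx⟩, Sum.elim_comp_inr x y⟩

theorem parametricValue_eq
    (hfib : ∀ x y, Sum.elim x y ∈ basicClosedSet H ↔ y ∈ Y ∧ x ∈ Ky y)
    {f : MvPolynomial (α ⊕ β) ℝ} {y : β → ℝ} (hy : y ∈ Y) :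
    parametricValue Sum.inr H f y = sInf ((fun x => eval (Sum.elim x y) f) '' Ky y) := by
  refine congrArg sInf (ext fun r => ?_)
  constructor
  · rintro ⟨w, ⟨hw, rfl⟩, rfl⟩
    rw [← Sum.elim_comp_inl_inr w] at hw
    exact ⟨w ∘ Sum.inl, ((hfib _ _).1 hw).2,
      congrArg (eval · f) (Sum.elim_comp_inl_inr w)⟩
  · rintro ⟨x, hx, rfl⟩
    exact ⟨Sum.elim x y, ⟨(hfib x y).2 ⟨hy, hx⟩, Sum.elim_comp_inr x y⟩, rfl⟩

theorem sumElim_mem_basicClosedSet_iff {ι' : Type*} {hx : ι → MvPolynomial (α ⊕ β) ℝ}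
    {hy : ι' → MvPolynomial β ℝ} {x : α → ℝ} {y : β → ℝ} :
    Sum.elim x y ∈ basicClosedSet (Sum.elim hx fun k => rename Sum.inr (hy k)) ↔
      (∀ k, 0 ≤ eval y (hy k)) ∧ ∀ j, 0 ≤ eval (Sum.elim x y) (hx j) := by
  simp only [basicClosedSet, mem_ofPred_eq, Sum.forall, Sum.elim_inl, Sum.elim_inr, eval_rename,
    Sum.elim_comp_inr, and_comm]

end Fibers

variable {n p : ℕ} {ι : Type*} [Fintype ι] {H : ι → MvPolynomial (Fin n ⊕ Fin p) ℝ}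
  {f : MvPolynomial (Fin n ⊕ Fin p) ℝ}

theorem isArchimedean_generated_of_archimedeanQM (hH : ArchimedeanQM n p H) :
    (SumSqModule.generated (range H)).IsArchimedean := by
  obtain ⟨N, hN⟩ := hH
  exact SumSqModule.isArchimedean_of_sub_sum_X_sq_mem (SumSqModule.one_mem_generated _)
    (SumSqModule.mem_generated_range.2 hN)

/-- The polynomial `q` is feasible for the `i`-th dual semidefinite relaxation. -/
def IsDualFeasible (H : ι → MvPolynomial (Fin n ⊕ Fin p) ℝ) (f : MvPolynomial (Fin n ⊕ Fin p) ℝ)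
    (i : ℕ) (q : MvPolynomial (Fin p) ℝ) : Prop :=
  ∃ (σ₀ : MvPolynomial (Fin n ⊕ Fin p) ℝ) (σ : ι → MvPolynomial (Fin n ⊕ Fin p) ℝ),
    IsSumSq σ₀ ∧ (∀ j, IsSumSq (σ j)) ∧ f - rename Sum.inr q = σ₀ + ∑ j, σ j * H j ∧
    q.totalDegree ≤ 2 * i ∧ σ₀.totalDegree ≤ 2 * i ∧ ∀ j, (σ j * H j).totalDegree ≤ 2 * i

theorem IsDualFeasible.sub_rename_mem_generated {i : ℕ} {q : MvPolynomial (Fin p) ℝ}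
    (hq : IsDualFeasible H f i q) : f - rename Sum.inr q ∈ SumSqModule.generated (range H) := by
  obtain ⟨σ₀, σ, hσ₀, hσ, heq, -⟩ := hq
  exact SumSqModule.mem_generated_range.2 ⟨σ₀, σ, hσ₀, hσ, heq⟩

theorem eventually_isDualFeasible {q : MvPolynomial (Fin p) ℝ}
    (hq : f - rename Sum.inr q ∈ SumSqModule.generated (range H)) :
    ∀ᶠ i in atTop, IsDualFeasible H f i q := by
  obtain ⟨σ₀, σ, hσ₀, hσ, heq⟩ := SumSqModule.mem_generated_range.1 hq
  have eventually_le (d : ℕ) : ∀ᶠ i in atTop, d ≤ 2 * i :=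
    (eventually_ge_atTop d).mono fun i hi => by omega
  filter_upwards [eventually_le q.totalDegree, eventually_le σ₀.totalDegree,
    eventually_all.2 fun j => eventually_le (σ j * H j).totalDegree] with i hq hσ₀i hσi
  exact ⟨σ₀, σ, hσ₀, hσ, heq, hq, hσ₀i, hσi⟩

theorem rhoSDPdual_eq_sSup (Y : Set (Fin p → ℝ)) (φ : Measure (Fin p → ℝ)) (i : ℕ) :
    rhoSDPdual n p H f Y φ i =
      sSup ((fun q => ∫ y in Y, eval y q ∂φ) '' {q | IsDualFeasible H f i q}) := by
  refine congrArg sSup (ext fun r => ?_)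
  constructor
  · rintro ⟨q, σ₀, σ, hσ₀, hσ, heq, hq, hσ₀i, hσi, rfl⟩
    exact ⟨q, ⟨σ₀, σ, hσ₀, hσ, heq, hq, hσ₀i, hσi⟩, rfl⟩
  · rintro ⟨q, ⟨σ₀, σ, hσ₀, hσ, heq, hq, hσ₀i, hσi⟩, rfl⟩
    exact ⟨q, σ₀, σ, hσ₀, hσ, heq, hq, hσ₀i, hσi, rfl⟩

theorem tendsto_rhoSDPdual (hH : (SumSqModule.generated (range H)).IsArchimedean)
    (φ : Measure (Fin p → ℝ)) [IsFiniteMeasureOnCompacts φ] :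
    Tendsto (rhoSDPdual n p H f (feasibleParameters Sum.inr H) φ) atTop
      (𝓝 (∫ y in feasibleParameters Sum.inr H, parametricValue Sum.inr H f y ∂φ)) := by
  have integral_le (i : ℕ) : ∀ r ∈ (fun q => ∫ y in feasibleParameters Sum.inr H, eval y q ∂φ) ''
      {q | IsDualFeasible H f i q},
      r ≤ ∫ y in feasibleParameters Sum.inr H, parametricValue Sum.inr H f y ∂φ :=
    forall_mem_image.2 fun q hq =>
      integral_eval_le_integral_parametricValue φ hH hq.sub_rename_mem_generated
  have exists_feasible {c : ℝ}
      (hc : c < ∫ y in feasibleParameters Sum.inr H, parametricValue Sum.inr H f y ∂φ) :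
      ∃ q, (∀ᶠ i in atTop, IsDualFeasible H f i q) ∧
        c < ∫ y in feasibleParameters Sum.inr H, eval y q ∂φ := by
    obtain ⟨q, hq, hcq⟩ := exists_mvPolynomial_lt_valueFunction_lt_integral
      (isCompact_basicClosedSet hH) (Pi.continuous_precomp Sum.inr) (continuous_eval f) φ hc
    exact ⟨q, eventually_isDualFeasible (sub_rename_mem_generated hH hq), hcq⟩
  simp only [funext (rhoSDPdual_eq_sSup (feasibleParameters Sum.inr H) φ)]
  refine tendsto_order.2 ⟨fun c hc => ?_, fun c hc => ?_⟩
  · obtain ⟨q, hq, hcq⟩ := exists_feasible hc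
    filter_upwards [hq] with i hi
    exact hcq.trans_le (le_csSup ⟨_, integral_le i⟩ ⟨q, hi, rfl⟩)
  · obtain ⟨q, hq, -⟩ := exists_feasible (sub_one_lt _)
    filter_upwards [hq] with i hi
    exact (csSup_le (Set.Nonempty.image _ ⟨q, hi⟩) (integral_le i)).trans_lt hc

theorem tendsto_integral_of_nearlyOptimal (hH : (SumSqModule.generated (range H)).IsArchimedean)
    (φ : Measure (Fin p → ℝ)) [IsFiniteMeasureOnCompacts φ] {q : ℕ → MvPolynomial (Fin p) ℝ}
    (hfeas : ∀ᶠ i in atTop, IsDualFeasible H f i (q i))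
    (hnear : ∀ᶠ i in atTop, rhoSDPdual n p H f (feasibleParameters Sum.inr H) φ i - 1 / (i : ℝ) ≤
      ∫ y in feasibleParameters Sum.inr H, eval y (q i) ∂φ) :
    Tendsto (fun i => ∫ y in feasibleParameters Sum.inr H, eval y (q i) ∂φ) atTop
      (𝓝 (∫ y in feasibleParameters Sum.inr H, parametricValue Sum.inr H f y ∂φ)) := by
  refine tendsto_of_tendsto_of_tendsto_of_le_of_le' ?_ tendsto_const_nhds hnear <|
    hfeas.mono fun i hi =>
      integral_eval_le_integral_parametricValue φ hH hi.sub_rename_mem_generated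
  simpa only [sub_zero] using (tendsto_rhoSDPdual hH φ).sub tendsto_one_div_atTop_nhds_zero_nat

end DualRelaxation

theorem stmt14_general {n p : ℕ} {ι : Type*} [Fintype ι]
    {H : ι → MvPolynomial (Fin n ⊕ Fin p) ℝ} (harch : ArchimedeanQM n p H)
    {f : MvPolynomial (Fin n ⊕ Fin p) ℝ} {Y : Set (Fin p → ℝ)}
    {Ky : (Fin p → ℝ) → Set (Fin n → ℝ)}
    (hfib : ∀ x y, Sum.elim x y ∈ basicClosedSet H ↔ y ∈ Y ∧ x ∈ Ky y)
    (hne : ∀ y ∈ Y, (Ky y).Nonempty)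
    (φ : Measure (Fin p → ℝ)) [IsFiniteMeasureOnCompacts φ] {J : (Fin p → ℝ) → ℝ}
    (hJ : ∀ y ∈ Y, J y = sInf ((fun x => evalXY n p f (x, y)) '' Ky y))
    {ps : ℕ → MvPolynomial (Fin p) ℝ} {i₀ : ℕ}
    (hfeas : ∀ i, i₀ ≤ i → IsDualFeasible H f i (ps i))
    (hnear : ∀ i, i₀ ≤ i → rhoSDPdual n p H f Y φ i - 1 / (i : ℝ) ≤ ∫ y in Y, eval y (ps i) ∂φ)
    {ptilde : ℕ → (Fin p → ℝ) → ℝ} (hpt0 : ptilde i₀ = fun y => eval y (ps i₀))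
    (hptS : ∀ i, i₀ ≤ i → ptilde (i + 1) = fun y => max (ptilde i y) (eval y (ps (i + 1)))) :
    (∀ i, i₀ ≤ i → ∀ y ∈ Y, eval y (ps i) ≤ J y) ∧
    Tendsto (fun i => ∫ y in Y, (J y - eval y (ps i)) ∂φ) atTop (𝓝 0) ∧
    (∀ ε : ENNReal, 0 < ε → ∃ A : Set (Fin p → ℝ),
      A ⊆ Y ∧ MeasurableSet A ∧ φ A < ε ∧
      TendstoUniformlyOn ptilde J atTop (Y \ A)) := by
  have value_eq : EqOn (parametricValue Sum.inr H f) J Y := fun y hy =>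
    (parametricValue_eq hfib hy).trans (hJ y hy).symm
  obtain rfl := feasibleParameters_eq hfib hne
  have hH := isArchimedean_generated_of_archimedeanQM harch
  have mem_generated (i : ℕ) (hi : i₀ ≤ i) := (hfeas i hi).sub_rename_mem_generated
  have hlim := tendsto_integral_of_nearlyOptimal hH φ
    ((eventually_ge_atTop i₀).mono hfeas) ((eventually_ge_atTop i₀).mono hnear)
  refine ⟨fun i hi y hy => value_eq hy ▸ eval_le_parametricValue (mem_generated i hi) hy, ?_,
    fun ε hε => ?_⟩
  · refine (tendsto_integral_parametricValue_sub φ hH hlim).congr fun i =>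
      setIntegral_congr_fun (isCompact_feasibleParameters hH).isClosed.measurableSet
        fun y hy => congrArg (· - eval y (ps i)) (value_eq hy)
  · obtain ⟨A, hA, hAm, hAε, hunif⟩ := exists_measure_lt_tendstoUniformlyOn_runningMax φ hH
      mem_generated hlim hpt0 hptS hε
    exact ⟨A, hA, hAm, hAε, hunif.congr_right (value_eq.mono sdiff_subset)⟩

/-- nearly optimal solutions of the dual SDP relaxations are polynomial
lower approximations of `J` converging in `L¹(φ)`, and their running maxima converge to
`J` almost uniformly on `Y`. -/
theorem stmt14 (n p m s : ℕ)
    (f : MvPolynomial (Fin n ⊕ Fin p) ℝ)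
    (hx : Fin m → MvPolynomial (Fin n ⊕ Fin p) ℝ)
    (hy : Fin s → MvPolynomial (Fin p) ℝ)
    (H : Fin m ⊕ Fin s → MvPolynomial (Fin n ⊕ Fin p) ℝ)
    (hH : H = Sum.elim hx (fun k => rename Sum.inr (hy k)))
    (Y : Set (Fin p → ℝ)) (hYdef : Y = {y | ∀ k, 0 ≤ eval y (hy k)}) (hYc : IsCompact Y)
    (K : Set ((Fin n → ℝ) × (Fin p → ℝ)))
    (hKdef : K = {w | w.2 ∈ Y ∧ ∀ j, 0 ≤ evalXY n p (hx j) w}) (hKc : IsCompact K)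
    (Ky : (Fin p → ℝ) → Set (Fin n → ℝ))
    (hKy : ∀ y, Ky y = {x | ∀ j, 0 ≤ eval (Sum.elim x y) (hx j)})
    (hne : ∀ y ∈ Y, (Ky y).Nonempty)
    (harch : ArchimedeanQM n p H)
    (φ : Measure (Fin p → ℝ)) [IsProbabilityMeasure φ] (hφY : φ Yᶜ = 0)
    (γ : (Fin p → ℕ) → ℝ)
    (hγ : ∀ β, γ β = ∫ y in Y, ∏ l, y l ^ β l ∂φ)
    (J : (Fin p → ℝ) → ℝ)
    (hJ : ∀ y, J y = sInf ((fun x => evalXY n p f (x, y)) '' Ky y))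
    (ps : ℕ → MvPolynomial (Fin p) ℝ)
    (hfeas : ∀ i, iZero n p H f ≤ i →
      ∃ (σ0 : MvPolynomial (Fin n ⊕ Fin p) ℝ)
        (σ : Fin m ⊕ Fin s → MvPolynomial (Fin n ⊕ Fin p) ℝ),
        IsSumSq σ0 ∧ (∀ j, IsSumSq (σ j)) ∧
        f - rename Sum.inr (ps i) = σ0 + ∑ j, σ j * H j ∧
        (ps i).totalDegree ≤ 2 * i ∧ σ0.totalDegree ≤ 2 * i ∧
        (∀ j, (σ j * H j).totalDegree ≤ 2 * i))
    (hnear : ∀ i, iZero n p H f ≤ i →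
      rhoSDPdual n p H f Y φ i - 1 / (i : ℝ) ≤ ∫ y in Y, eval y (ps i) ∂φ)
    (ptilde : ℕ → (Fin p → ℝ) → ℝ)
    (hpt0 : ptilde (iZero n p H f) = fun y => eval y (ps (iZero n p H f)))
    (hptS : ∀ i, iZero n p H f ≤ i →
      ptilde (i + 1) = fun y => max (ptilde i y) (eval y (ps (i + 1)))) :
    (∀ i, iZero n p H f ≤ i → ∀ y ∈ Y, eval y (ps i) ≤ J y) ∧
    Tendsto (fun i => ∫ y in Y, (J y - eval y (ps i)) ∂φ) atTop (𝓝 0) ∧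
    (∀ ε : ENNReal, 0 < ε → ∃ A : Set (Fin p → ℝ),
      A ⊆ Y ∧ MeasurableSet A ∧ φ A < ε ∧
      TendstoUniformlyOn ptilde J atTop (Y \ A)) := by
  have mem_iff (x : Fin n → ℝ) (y : Fin p → ℝ) :
      Sum.elim x y ∈ basicClosedSet H ↔ y ∈ Y ∧ x ∈ Ky y := by
    rw [hH, hYdef, hKy]
    exact sumElim_mem_basicClosedSet_iff
  exact stmt14_general harch mem_iff hne φ (fun y _ => hJ y) hfeas hnear hpt0 hptS
end
end

section
/- Let K ⊂ ℝ^n × ℝ^p be compact, f : K → ℝ continuous, and let π denote the marginal map sending a finite Borel measure μ on K to its pushforward on ℝ^p under the projection (x,y) ↦ y. Then the set D := { (πμ, ∫_K f dμ) : μ a finite (nonnegative) Borel measure on K } is closed in M(Y) × ℝ, where M(Y) carries the weak-* topology σ(M(Y), C(Y)) induced by duality with bounded continuous functions. -/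
open MeasureTheory Set

/-! On a compact Hausdorff space the total mass `μ ↦ μ.mass` is a proper map: its sublevel sets are
weakly compact. A pushforward preserves mass, so the mass of `μ` is a continuous function of the
pair `(g_* μ, ∫ f dμ)`. A continuous map into a Hausdorff space is proper if composing it with some
continuous map gives a proper map; hence `μ ↦ (g_* μ, ∫ f dμ)` is proper and has closed range.
Measures carried by a compact set `K` are finite measures on the compact space `K`. -/

section MapProdIntegral

open scoped NNReal

variable {X Z : Type*} [TopologicalSpace X] [MeasurableSpace X] [TopologicalSpace Z]
  [MeasurableSpace Z] [BorelSpace Z]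

theorem isProperMap_finiteMeasure_mass [T2Space X] [CompactSpace X] [BorelSpace X] :
    IsProperMap (FiniteMeasure.mass : FiniteMeasure X → ℝ≥0) := by
  refine isProperMap_iff_isCompact_preimage.2 ⟨FiniteMeasure.continuous_mass, fun C hC => ?_⟩
  obtain ⟨c, hc⟩ := hC.bddAbove
  exact (isCompact_setOfPred_finiteMeasure_le_of_compactSpace X c).of_isClosed_subset
    (hC.isClosed.preimage FiniteMeasure.continuous_mass) fun _ hμ => hc hμ

/-- The map `μ ↦ (g_* μ, ∫ f dμ)` on finite measures. For a projection `g` it pairs the marginal of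
`μ` with the integral of `f`. -/
noncomputable def mapProdIntegral (g : C(X, Z)) (f : C(X, ℝ)) (μ : FiniteMeasure X) :
    FiniteMeasure Z × ℝ :=
  (μ.map g, ∫ x, f x ∂μ)

theorem continuous_mapProdIntegral [CompactSpace X] [OpensMeasurableSpace X] (g : C(X, Z))
    (f : C(X, ℝ)) : Continuous (mapProdIntegral g f) :=
  (FiniteMeasure.continuous_map g.continuous).prodMk
    (FiniteMeasure.continuous_integral_continuousMap f)

theorem mass_mapProdIntegral_fst [OpensMeasurableSpace X] (g : C(X, Z)) (f : C(X, ℝ))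
    (μ : FiniteMeasure X) : (mapProdIntegral g f μ).1.mass = μ.mass :=
  μ.map_apply g.measurable MeasurableSet.univ

theorem isProperMap_mapProdIntegral [T2Space X] [CompactSpace X] [BorelSpace X]
    [HasOuterApproxClosed Z] (g : C(X, Z)) (f : C(X, ℝ)) : IsProperMap (mapProdIntegral g f) := by
  refine isProperMap_of_comp_of_t2 (g := fun vr => vr.1.mass) (continuous_mapProdIntegral g f)
    (FiniteMeasure.continuous_mass.comp continuous_fst) ?_
  simpa only [Function.comp_def, mass_mapProdIntegral_fst] using isProperMap_finiteMeasure_mass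

end MapProdIntegral

section Subtype

variable {X : Type*} [MeasurableSpace X] {K : Set X}

theorem isFiniteMeasure_and_compl_eq_zero_iff (hK : MeasurableSet K) {μ : Measure X} :
    IsFiniteMeasure μ ∧ μ Kᶜ = 0 ↔
      ∃ m : FiniteMeasure K, (m : Measure K).map Subtype.val = μ := by
  constructor
  · rintro ⟨_, hμK⟩
    exact ⟨⟨μ.comap Subtype.val, inferInstance⟩,
      (map_comap_subtype_coe hK μ).trans (Measure.restrict_eq_self_of_ae_mem hμK)⟩
  · rintro ⟨m, rfl⟩
    refine ⟨inferInstance, ?_⟩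
    simp [Measure.map_apply measurable_subtype_coe hK.compl]

theorem map_map_subtype_val {Z : Type*} [MeasurableSpace Z] (hK : MeasurableSet K)
    (m : Measure K) {g : X → Z} (hg : Measurable (K.domRestrict g)) :
    (m.map Subtype.val).map g = m.map (K.domRestrict g) :=
  AEMeasurable.map_map_of_aemeasurable
    ((MeasurableEmbedding.subtype_coe hK).aemeasurable_map_iff.2 hg.aemeasurable)
    measurable_subtype_coe.aemeasurable

theorem setIntegral_map_subtype_val {E : Type*} [NormedAddCommGroup E] [NormedSpace ℝ E]
    (hK : MeasurableSet K) (m : Measure K) (f : X → E) :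
    ∫ x in K, f x ∂(m.map Subtype.val) = ∫ x, K.domRestrict f x ∂m := by
  simp [(MeasurableEmbedding.subtype_coe hK).setIntegral_map]

end Subtype

theorem stmt19_general {X Z : Type*} [TopologicalSpace X] [T2Space X] [MeasurableSpace X]
    [BorelSpace X] [TopologicalSpace Z] [HasOuterApproxClosed Z] [MeasurableSpace Z] [BorelSpace Z]
    {K : Set X} (hK : IsCompact K) {g : X → Z} (hg : ContinuousOn g K)
    {f : X → ℝ} (hf : ContinuousOn f K) :
    IsClosed {vr : FiniteMeasure Z × ℝ |
      ∃ μ : Measure X, IsFiniteMeasure μ ∧ μ Kᶜ = 0 ∧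
        μ.map g = (vr.1 : Measure Z) ∧ vr.2 = ∫ x in K, f x ∂μ} := by
  have : CompactSpace K := isCompact_iff_compactSpace.mp hK
  have hKm : MeasurableSet K := hK.measurableSet
  let gK : C(K, Z) := ⟨K.domRestrict g, hg.domRestrict⟩
  let fK : C(K, ℝ) := ⟨K.domRestrict f, hf.domRestrict⟩
  have hmap (m : Measure K) : (m.map Subtype.val).map g = m.map gK :=
    map_map_subtype_val hKm m gK.measurable
  have hint (m : Measure K) : ∫ x in K, f x ∂(m.map Subtype.val) = ∫ x, fK x ∂m :=
    setIntegral_map_subtype_val hKm m f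
  convert (isProperMap_mapProdIntegral gK fK).isClosedMap.isClosed_range using 1
  ext ⟨ν, r⟩
  constructor
  · rintro ⟨μ, hμ, hμK, hν, hr⟩
    obtain ⟨m, rfl⟩ := (isFiniteMeasure_and_compl_eq_zero_iff hKm).1 ⟨hμ, hμK⟩
    exact ⟨m, Prod.ext (Subtype.ext ((hmap m).symm.trans hν)) ((hint m).symm.trans hr.symm)⟩
  · rintro ⟨m, hm⟩
    obtain ⟨rfl, rfl⟩ := Prod.mk.inj hm
    obtain ⟨hμ, hμK⟩ := (isFiniteMeasure_and_compl_eq_zero_iff hKm).2 ⟨m, rfl⟩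
    exact ⟨_, hμ, hμK, hmap m, (hint m).symm⟩

/-- with `K ⊂ ℝ^n × ℝ^p` compact and `f` continuous on `K`, the set
`D = {(πμ, ∫_K f dμ) : μ a finite Borel measure on K}` is closed in `M(Y) × ℝ`, where
the space of finite measures carries the topology of weak convergence (duality with
bounded continuous functions). -/
theorem stmt19 (n p : ℕ)
    (Y : Set (Fin p → ℝ)) (hYc : IsCompact Y)
    (K : Set ((Fin n → ℝ) × (Fin p → ℝ))) (hKc : IsCompact K)
    (hKY : ∀ w ∈ K, w.2 ∈ Y)
    (f : (Fin n → ℝ) × (Fin p → ℝ) → ℝ) (hf : ContinuousOn f K) :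
    IsClosed {vr : FiniteMeasure (Fin p → ℝ) × ℝ |
      ∃ μ : Measure ((Fin n → ℝ) × (Fin p → ℝ)), IsFiniteMeasure μ ∧ μ Kᶜ = 0 ∧
        μ.map Prod.snd = (vr.1 : Measure (Fin p → ℝ)) ∧
        vr.2 = ∫ w in K, f w ∂μ} :=
  stmt19_general hKc continuous_snd.continuousOn hf
end
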